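/- arXiv:2206.14032 — 2 statements merged into one kernel-verified Lean document; each statement's English description precedes it below -/
import Mathlib

section
/- Let $c$ and $b$ be positive integers. Then there exists at most one pair of positive integers $(z,y)$ for which $0 < |c^z - b^y| < \frac{1}{4} \max\{ c^{z/2}, b^{y/2} \}$: if $(z_1,y_1)$ and $(z_2,y_2)$ are pairs of positive integers both satisfying this inequality, then $(z_1,y_1) = (z_2,y_2)$. -/
/-!
If `(u, v)` and `(z, y)` are two solutions, then `A = cᵘ` and `B = bᵛ` are close to each other, and
dividing `z` by `u` writes `cᶻ - bʸ` as `Y Aᵐ - X Bᵐ`. Homogeneous Padé approximants to `(1 - t)ᵐ`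
at `t = (A - B) / A` have integer coefficients; when `Y Aᵐ - X Bᵐ` is too small, the integer they
produce from it must vanish, and then its sign is `(-1)ⁿ` for the approximant of index `n`. Two
consecutive indices give opposite signs, a contradiction. For large `A`, size estimates show that
this always applies; for small `A` it is combined with finite computations. The pair `17`, `16` is
too far apart: for large `m` the approximants are divided by the common prime factors of their
coefficients, counted by Chebyshev's method, and for intermediate `m` the continued fraction of
`log 17 / log 2` excludes a coincidence.
-/

namespace PillaiPade

section RationalCoeff

variable {R : Type*} [CommRing R]

/-- The coefficient of `t ^ N` in the power series `(1 - a t)⁻ⁱ (1 - b t)⁻ʲ`. The numerators,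
denominators and remainders of the Padé approximants below are all of this form. -/
noncomputable def ratCoeff (a b : R) (N i j : ℕ) : R :=
  PowerSeries.coeff N
    (PowerSeries.rescale a (PowerSeries.mk 1) ^ i * PowerSeries.rescale b (PowerSeries.mk 1) ^ j)

theorem rescale_mk_one_eq (a : R) : PowerSeries.rescale a (PowerSeries.mk 1) =
    1 + PowerSeries.C a * PowerSeries.X * PowerSeries.rescale a (PowerSeries.mk 1) := by
  have h := congrArg (PowerSeries.rescale a) (PowerSeries.mk_one_mul_one_sub_eq_one R)
  rw [map_mul, map_sub, map_one, PowerSeries.rescale_X] at h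
  linear_combination h

theorem ratCoeff_comm (a b : R) (N i j : ℕ) : ratCoeff a b N i j = ratCoeff b a N j i := by
  rw [ratCoeff, ratCoeff, mul_comm]

@[simp]
theorem ratCoeff_zero (a b : R) (i j : ℕ) : ratCoeff a b 0 i j = 1 := by
  have h (c : R) : PowerSeries.constantCoeff (PowerSeries.rescale c (PowerSeries.mk 1)) = 1 := by
    rw [← PowerSeries.coeff_zero_eq_constantCoeff_apply, PowerSeries.coeff_rescale]
    simp
  simp [ratCoeff, h]

@[simp]
theorem ratCoeff_succ_zero_zero (a b : R) (N : ℕ) : ratCoeff a b (N + 1) 0 0 = 0 := by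
  simp [ratCoeff, PowerSeries.coeff_one]

theorem ratCoeff_succ_left (a b : R) (N i j : ℕ) :
    ratCoeff a b (N + 1) (i + 1) j =
      ratCoeff a b (N + 1) i j + a * ratCoeff a b N (i + 1) j := by
  simp only [ratCoeff]
  set f := PowerSeries.rescale a (PowerSeries.mk 1)
  set g := PowerSeries.rescale b (PowerSeries.mk 1)
  have h : f ^ (i + 1) * g ^ j =
      f ^ i * g ^ j + PowerSeries.C a * (PowerSeries.X * (f ^ (i + 1) * g ^ j)) := by
    linear_combination f ^ i * g ^ j * rescale_mk_one_eq a
  conv_lhs => rw [h, map_add, PowerSeries.coeff_C_mul, PowerSeries.coeff_succ_X_mul]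

theorem ratCoeff_succ_right (a b : R) (N i j : ℕ) :
    ratCoeff a b (N + 1) i (j + 1) =
      ratCoeff a b (N + 1) i j + b * ratCoeff a b N i (j + 1) := by
  rw [ratCoeff_comm, ratCoeff_succ_left, ratCoeff_comm b a, ratCoeff_comm b a]

theorem sub_mul_ratCoeff (a b : R) (N i j : ℕ) :
    (a - b) * ratCoeff a b N (i + 1) (j + 1) =
      a * ratCoeff a b N (i + 1) j - b * ratCoeff a b N i (j + 1) := by
  simp only [ratCoeff]
  set f := PowerSeries.rescale a (PowerSeries.mk 1)
  set g := PowerSeries.rescale b (PowerSeries.mk 1)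
  simp only [← PowerSeries.coeff_C_mul, ← map_sub]
  congr 1
  rw [map_sub]
  linear_combination f ^ i * g ^ j * (PowerSeries.C a * f * rescale_mk_one_eq b -
    PowerSeries.C b * g * rescale_mk_one_eq a)

theorem ratCoeff_right_zero (a b : R) (N i : ℕ) :
    ratCoeff a b N i 0 = Nat.multichoose i N * a ^ N := by
  induction N generalizing i with
  | zero => simp
  | succ N ih_N =>
    induction i with
    | zero => simp
    | succ i ih_i =>
      rw [ratCoeff_succ_left, ih_i, ih_N, Nat.multichoose_succ_succ]
      push_cast
      ring

theorem ratCoeff_left_zero (a b : R) (N j : ℕ) :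
    ratCoeff a b N 0 j = Nat.multichoose j N * b ^ N := by
  rw [ratCoeff_comm, ratCoeff_right_zero]

theorem ratCoeff_eq_sum (a b : R) (N i j : ℕ) :
    ratCoeff a b N i j = ∑ k ∈ Finset.range (N + 1),
      Nat.multichoose i k * a ^ k * (Nat.multichoose j (N - k) * b ^ (N - k)) := by
  simp only [← ratCoeff_right_zero a a, ← ratCoeff_left_zero b b]
  simp only [ratCoeff, PowerSeries.coeff_mul, pow_zero, mul_one, one_mul]
  exact Finset.Nat.sum_antidiagonal_eq_sum_range_succ_mk _ N

theorem multichoose_succ_comm (m n : ℕ) :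
    Nat.multichoose (m + 1) n = Nat.multichoose (n + 1) m := by
  rw [Nat.multichoose_eq, Nat.multichoose_eq, Nat.add_right_comm, Nat.add_sub_cancel,
    Nat.add_right_comm, Nat.add_sub_cancel, add_comm m, Nat.choose_symm_add]

/-- The partial fraction decomposition of `(1 - a t)⁻⁽ⁱ⁺¹⁾ (1 - b t)⁻⁽ʲ⁺¹⁾`, multiplied by
`(a - b) ^ (i + j + 1)`, read off at `t ^ N`. -/
theorem pade_identity (a b : R) (N i j : ℕ) :
    (a - b) ^ (i + j + 1) * ratCoeff a b N (i + 1) (j + 1) =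
      a ^ (N + j + 1) * ratCoeff (-b) (a - b) i (j + 1) (N + 1) +
        (-1) ^ (i + 1) * b ^ (N + i + 1) * ratCoeff a (a - b) j (i + 1) (N + 1) := by
  induction hs : i + j generalizing i j with
  | zero =>
    obtain ⟨rfl, rfl⟩ : i = 0 ∧ j = 0 := by omega
    have h := sub_mul_ratCoeff a b N 0 0
    simp only [ratCoeff_right_zero, ratCoeff_left_zero, zero_add, Nat.multichoose_one] at h
    simp only [ratCoeff_zero, zero_add, pow_one, h]
    ring
  | succ s ih =>
    have h : (a - b) ^ (s + 1 + 1) * ratCoeff a b N (i + 1) (j + 1) =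
        a * ((a - b) ^ (s + 1) * ratCoeff a b N (i + 1) j) -
          b * ((a - b) ^ (s + 1) * ratCoeff a b N i (j + 1)) := by
      linear_combination (a - b) ^ (s + 1) * sub_mul_ratCoeff a b N i j
    rw [h]
    rcases i with _ | i <;> rcases j with _ | j
    · omega
    · obtain rfl : j = s := by omega
      rw [ih 0 j (by omega), ratCoeff_succ_left a (a - b) j, ratCoeff_left_zero,
        ratCoeff_left_zero, multichoose_succ_comm (j + 1) N]
      simp only [ratCoeff_zero]
      ring
    · obtain rfl : i = s := by omega
      rw [ih i 0 (by omega), ratCoeff_succ_left (-b) (a - b) i, ratCoeff_right_zero,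
        ratCoeff_left_zero, multichoose_succ_comm (i + 1) N]
      simp only [ratCoeff_zero]
      ring
    · rw [ih (i + 1) j (by omega), ih i (j + 1) (by omega),
        ratCoeff_succ_left (-b) (a - b) i (j + 1), ratCoeff_succ_left a (a - b) j (i + 1)]
      ring

end RationalCoeff

section OrderedRationalCoeff

variable {R : Type*} [CommRing R] [LinearOrder R] [IsStrictOrderedRing R] {a b d s : R}

theorem ratCoeff_nonneg (ha : 0 ≤ a) (hb : 0 ≤ b) (N i j : ℕ) : 0 ≤ ratCoeff a b N i j := by
  rw [ratCoeff_eq_sum]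
  positivity

theorem ratCoeff_pos (ha : 0 < a) (hb : 0 ≤ b) (N i j : ℕ) : 0 < ratCoeff a b N (i + 1) j := by
  induction N with
  | zero => simp
  | succ N ih =>
    rw [ratCoeff_succ_left]
    have := ratCoeff_nonneg ha.le hb (N + 1) i j
    positivity

/-- The power series is at least its `N`-th term at `t = 1 / (a + b)`. -/
theorem ratCoeff_mul_pow_le (ha : 0 ≤ a) (hb : 0 ≤ b) (N i j : ℕ) :
    ratCoeff a b N i j * (a ^ j * b ^ i) ≤ (a + b) ^ (N + i + j) := by
  induction N generalizing i j with
  | zero =>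
    rw [ratCoeff_zero, one_mul, zero_add, pow_add, mul_comm]
    gcongr
    · exact le_add_of_nonneg_left ha
    · exact le_add_of_nonneg_right hb
  | succ N ih_N =>
    induction i with
    | zero =>
      induction j with
      | zero => simp only [ratCoeff_succ_zero_zero, zero_mul]; positivity
      | succ j ih_j =>
        rw [ratCoeff_succ_right]
        calc _ = a * (ratCoeff a b (N + 1) 0 j * (a ^ j * b ^ 0)) +
              b * (ratCoeff a b N 0 (j + 1) * (a ^ (j + 1) * b ^ 0)) := by ring
          _ ≤ a * (a + b) ^ (N + 1 + 0 + j) + b * (a + b) ^ (N + 0 + (j + 1)) := by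
            gcongr
            exact ih_N 0 (j + 1)
          _ = _ := by ring
    | succ i ih_i =>
      rw [ratCoeff_succ_left]
      calc _ = b * (ratCoeff a b (N + 1) i j * (a ^ j * b ^ i)) +
            a * (ratCoeff a b N (i + 1) j * (a ^ j * b ^ (i + 1))) := by ring
        _ ≤ b * (a + b) ^ (N + 1 + i + j) + a * (a + b) ^ (N + (i + 1) + j) := by
          gcongr
          exact ih_N (i + 1) j
        _ = _ := by ring

theorem ratCoeff_one_mul_sub_pow_le (hd : 0 ≤ d) (hda : d ≤ a) (N j : ℕ) :
    ratCoeff a d N 1 j * (a - d) ^ j ≤ a ^ (N + j) := by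
  have ha := hd.trans hda
  induction j with
  | zero => simp [ratCoeff_right_zero, Nat.multichoose_one]
  | succ j ih =>
    have h_step : (a - d) * ratCoeff a d N 1 (j + 1) ≤ a * ratCoeff a d N 1 j := by
      have h_rec := sub_mul_ratCoeff a d N 0 j
      rw [zero_add] at h_rec
      rw [h_rec]
      exact sub_le_self _ (mul_nonneg hd (ratCoeff_nonneg ha hd ..))
    calc _ = (a - d) ^ j * ((a - d) * ratCoeff a d N 1 (j + 1)) := by ring
      _ ≤ (a - d) ^ j * (a * ratCoeff a d N 1 j) := mul_le_mul_of_nonneg_left h_step (by positivity)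
      _ = a * (ratCoeff a d N 1 j * (a - d) ^ j) := by ring
      _ ≤ a * a ^ (N + j) := by gcongr
      _ = _ := by ring

theorem multichoose_mul_two_pow_le {n k : ℕ} (hk : k ≤ n) :
    Nat.multichoose (n + 1) k * 2 ^ (n - k) ≤ 4 ^ n := by
  have h_choose (k : ℕ) : Nat.multichoose (n + 1) k = (n + k).choose k := by
    rw [Nat.multichoose_eq, Nat.add_right_comm, Nat.add_sub_cancel]
  simp only [h_choose]
  induction hk using Nat.decreasingInduction with
  | self =>
    rw [Nat.sub_self, pow_zero, mul_one, ← two_mul, show 4 = 2 ^ 2 by rfl, ← pow_mul]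
    exact Nat.choose_le_two_pow _ _
  | of_succ k hk ih =>
    refine le_trans ?_ ih
    have h_double : 2 * (n + k).choose k ≤ (n + (k + 1)).choose (k + 1) := by
      refine Nat.le_of_mul_le_mul_right ?_ k.succ_pos
      rw [← add_assoc, ← Nat.add_one_mul_choose_eq]
      nlinarith [Nat.zero_le ((n + k).choose k)]
    rw [show n - k = n - (k + 1) + 1 by omega, pow_succ]
    nlinarith [Nat.mul_le_mul_right (2 ^ (n - (k + 1))) h_double]

/-- Bounding `multichoose (n + 1) k` by `4 ^ n / 2 ^ (n - k)` replaces `(1 - a t)⁻⁽ⁿ⁺¹⁾` by a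
multiple of the geometric series `(1 - 2 a t)⁻¹`. -/
theorem two_pow_mul_ratCoeff_le (ha : 0 ≤ a) (hd : 0 ≤ d) (n j : ℕ) :
    2 ^ n * ratCoeff a d n (n + 1) j ≤ 4 ^ n * ratCoeff (2 * a) d n 1 j := by
  rw [ratCoeff_eq_sum, ratCoeff_eq_sum, Finset.mul_sum, Finset.mul_sum]
  refine Finset.sum_le_sum fun k hk ↦ ?_
  have hk : k ≤ n := Finset.mem_range_succ_iff.1 hk
  have h_coeff : (Nat.multichoose (n + 1) k * 2 ^ (n - k) : R) ≤ 4 ^ n := by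
    exact_mod_cast multichoose_mul_two_pow_le hk
  have h_two : (2 : R) ^ n = 2 ^ k * 2 ^ (n - k) := by rw [← pow_add, Nat.add_sub_cancel' hk]
  calc _ = (Nat.multichoose (n + 1) k * 2 ^ (n - k)) *
        ((2 * a) ^ k * (Nat.multichoose j (n - k) * d ^ (n - k))) := by rw [h_two, mul_pow]; ring
    _ ≤ 4 ^ n * ((2 * a) ^ k * (Nat.multichoose j (n - k) * d ^ (n - k))) := by gcongr
    _ = _ := by rw [Nat.multichoose_one, Nat.cast_one, one_mul]

theorem ratCoeff_diag_mul_pow_le (hd : 0 ≤ d) (hda : d ≤ 2 * a) (n j : ℕ) :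
    ratCoeff a d n (n + 1) j * (2 * a - d) ^ j ≤ 4 ^ n * a ^ n * (2 * a) ^ j := by
  have ha : 0 ≤ a := by linarith
  refine le_of_mul_le_mul_left ?_ (by positivity : (0 : R) < 2 ^ n)
  calc _ = 2 ^ n * ratCoeff a d n (n + 1) j * (2 * a - d) ^ j := by ring
    _ ≤ 4 ^ n * ratCoeff (2 * a) d n 1 j * (2 * a - d) ^ j :=
      mul_le_mul_of_nonneg_right (two_pow_mul_ratCoeff_le ha hd n j) (by positivity)
    _ = 4 ^ n * (ratCoeff (2 * a) d n 1 j * (2 * a - d) ^ j) := by ring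
    _ ≤ 4 ^ n * (2 * a) ^ (n + j) := by
      gcongr
      exact ratCoeff_one_mul_sub_pow_le hd hda n j
    _ = _ := by rw [pow_add, mul_pow]; ring

end OrderedRationalCoeff

section Vanishing

theorem dvd_ratCoeff {R : Type*} [CommRing R] {Δ n i j : ℕ} (a b : R)
    (hΔ : ∀ k ≤ n, Δ ∣ Nat.multichoose i k * Nat.multichoose j (n - k)) :
    (Δ : R) ∣ ratCoeff a b n i j := by
  rw [ratCoeff_eq_sum]
  refine Finset.dvd_sum fun k hk ↦ ?_
  rw [mul_mul_mul_comm]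
  exact (by exact_mod_cast Nat.cast_dvd_cast (hΔ k (Finset.mem_range_succ_iff.1 hk)) :
    (Δ : R) ∣ Nat.multichoose i k * Nat.multichoose j (n - k)).mul_right _

/-- The difference of the two sides is `Aᵐ` times an integer divisible by `Δ`, with
`m = n + N + 1`, and each side is at most half of `Δ Aᵐ`. -/
theorem pade_remainder_eq {A B X Y : ℤ} {Δ n N : ℕ} (hB : 0 < B) (hBA : B < A) (hX : 0 ≤ X)
    (hΔ : ∀ k ≤ n, Δ ∣ Nat.multichoose (n + 1) k * Nat.multichoose (N + 1) (n - k))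
    (h_remainder : 2 * (X * (A - B) ^ (2 * n + 1) * ratCoeff A B N (n + 1) (n + 1)) <
      Δ * A ^ (n + N + 1))
    (h_denominator : 2 * (ratCoeff A (A - B) n (n + 1) (N + 1) *
      |Y * A ^ (n + N + 1) - X * B ^ (n + N + 1)|) ≤ Δ * A ^ (n + N + 1)) :
    (-1) ^ n * (X * (A - B) ^ (2 * n + 1) * ratCoeff A B N (n + 1) (n + 1)) =
      ratCoeff A (A - B) n (n + 1) (N + 1) * (Y * A ^ (n + N + 1) - X * B ^ (n + N + 1)) := by
  have hd : 0 < A - B := sub_pos.2 hBA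
  have h_identity := pade_identity A B N n n
  have hp := dvd_ratCoeff (-B) (A - B) hΔ
  have hq := dvd_ratCoeff A (A - B) hΔ
  have hq_pos : 0 < ratCoeff A (A - B) n (n + 1) (N + 1) :=
    ratCoeff_pos (hB.trans hBA) hd.le _ _ _
  have hH_pos : 0 < ratCoeff A B N (n + 1) (n + 1) := ratCoeff_pos (hB.trans hBA) hB.le _ _ _
  generalize ratCoeff A (A - B) n (n + 1) (N + 1) = q at *
  generalize ratCoeff (-B) (A - B) n (n + 1) (N + 1) = p at *
  generalize ratCoeff A B N (n + 1) (n + 1) = H at *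
  have h_sign : ((-1 : ℤ) ^ n) * (-1) ^ n = 1 := by rw [← mul_pow]; simp
  have h_form : A ^ (n + N + 1) * ((-1) ^ n * X * p - Y * q) =
      (-1) ^ n * (X * (A - B) ^ (2 * n + 1) * H) -
        q * (Y * A ^ (n + N + 1) - X * B ^ (n + N + 1)) := by
    linear_combination (-(-1) ^ n * X) * h_identity + (X * B ^ (n + N + 1) * q) * h_sign
  rw [← sub_eq_zero, ← h_form]
  refine Int.eq_zero_of_abs_lt_dvd (m := Δ * A ^ (n + N + 1)) ?_ ?_
  · rw [mul_comm]
    exact mul_dvd_mul_left _ (dvd_sub (hp.mul_left _) (hq.mul_left _))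
  · rw [h_form]
    refine (abs_sub _ _).trans_lt ?_
    rw [abs_mul, abs_pow, abs_neg, abs_one, one_pow, one_mul, abs_mul q, abs_of_pos hq_pos,
      abs_of_nonneg (a := X * (A - B) ^ (2 * n + 1) * H) (by positivity)]
    linarith

/-- Explicit conditions under which the `n`-th Padé approximant of `(1 - t)ᵐ`, `m = n + N + 1`,
turns `Y Aᵐ - X Bᵐ` into a vanishing integer, for `X Bᵐ ≤ lam Aᵐ` and
`15 (Y Aᵐ - X Bᵐ)² ≤ W Aᵐ`. The number `Δ` divides all coefficients of the approximant. -/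
structure PadeAdmissible (A B lam W Δ n N : ℕ) : Prop where
  dvd : ∀ k ≤ n, Δ ∣ Nat.multichoose (n + 1) k * Nat.multichoose (N + 1) (n - k)
  remainder_lt : 2 * lam * (A - B) ^ (2 * n + 1) * (A + B) ^ (2 * n + N + 2) <
    Δ * ((A * B) ^ (n + 1) * B ^ (n + N + 1))
  denominator_le : 4 * W * 16 ^ n * A ^ (2 * n) * (2 * A) ^ (2 * (N + 1)) ≤
    15 * Δ ^ 2 * A ^ (n + N + 1) * (A + B) ^ (2 * (N + 1))

namespace PadeAdmissible

variable {A B X lam W Δ n N : ℕ} {Y : ℤ}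

theorem two_mul_remainder_lt (h : PadeAdmissible A B lam W Δ n N) (hB : 0 < B) (hBA : B < A)
    (hX : X * B ^ (n + N + 1) ≤ lam * A ^ (n + N + 1)) :
    2 * ((X : ℤ) * ((A : ℤ) - B) ^ (2 * n + 1) * ratCoeff (A : ℤ) B N (n + 1) (n + 1)) <
      Δ * (A : ℤ) ^ (n + N + 1) := by
  obtain ⟨d, rfl⟩ := Nat.exists_eq_add_of_le hBA.le
  have h_lt := h.remainder_lt
  rw [Nat.add_sub_cancel_left] at h_lt
  have h_coeff := ratCoeff_mul_pow_le (a := ((B + d : ℕ) : ℤ)) (b := B) (by positivity)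
    (by positivity) N (n + 1) (n + 1)
  zify at h_lt hX
  rw [← Nat.cast_add] at h_lt hX
  rw [show ((B + d : ℕ) : ℤ) - B = d by push_cast; ring]
  have hA : (0 : ℤ) < (B + d : ℕ) := by positivity
  have h_nonneg := ratCoeff_nonneg hA.le (Int.natCast_nonneg B) N (n + 1) (n + 1)
  generalize ((B + d : ℕ) : ℤ) = A at *
  have h_pos : (0 : ℤ) < (A * B) ^ (n + 1) * B ^ (n + N + 1) := by positivity
  refine lt_of_mul_lt_mul_right ?_ h_pos.le
  calc _ = 2 * (X * (B : ℤ) ^ (n + N + 1)) * d ^ (2 * n + 1) *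
        (ratCoeff A B N (n + 1) (n + 1) * (A ^ (n + 1) * B ^ (n + 1))) := by ring
    _ ≤ 2 * (lam * A ^ (n + N + 1)) * d ^ (2 * n + 1) * (A + B) ^ (N + (n + 1) + (n + 1)) := by
      gcongr
    _ = A ^ (n + N + 1) * (2 * lam * d ^ (2 * n + 1) * (A + B) ^ (2 * n + N + 2)) := by ring
    _ < A ^ (n + N + 1) * (Δ * ((A * B) ^ (n + 1) * B ^ (n + N + 1))) := by gcongr
    _ = _ := by ring

theorem two_mul_denominator_le (h : PadeAdmissible A B lam W Δ n N) (hB : 0 < B) (hBA : B < A)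
    {E : ℤ} (hE : 15 * E ^ 2 ≤ W * (A : ℤ) ^ (n + N + 1)) :
    2 * (ratCoeff (A : ℤ) (A - B) n (n + 1) (N + 1) * |E|) ≤ Δ * (A : ℤ) ^ (n + N + 1) := by
  have h_le := h.denominator_le
  have h_sum : (2 * A - (A - B) : ℤ) = A + B := by ring
  zify at h_le hB hBA
  have hq := ratCoeff_diag_mul_pow_le (a := (A : ℤ)) (d := A - B) (by linarith) (by linarith)
    n (N + 1)
  have hq_nonneg : 0 ≤ ratCoeff (A : ℤ) (A - B) n (n + 1) (N + 1) :=
    ratCoeff_nonneg (by linarith) (by linarith) _ _ _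
  rw [h_sum] at hq
  generalize ratCoeff (A : ℤ) (A - B) n (n + 1) (N + 1) = q at *
  refine le_of_sq_le_sq ?_ (by positivity)
  have h_pos : 0 < 15 * ((A : ℤ) + B) ^ (2 * (N + 1)) := by positivity
  refine le_of_mul_le_mul_right ?_ h_pos
  calc (2 * (q * |E|)) ^ 2 * (15 * ((A : ℤ) + B) ^ (2 * (N + 1)))
      = 4 * (q * (A + B) ^ (N + 1)) ^ 2 * (15 * E ^ 2) := by rw [← sq_abs E]; ring
    _ ≤ 4 * (4 ^ n * A ^ n * (2 * A) ^ (N + 1)) ^ 2 * (W * (A : ℤ) ^ (n + N + 1)) := by gcongr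
    _ = (4 * W * 16 ^ n * A ^ (2 * n) * (2 * A) ^ (2 * (N + 1))) * (A : ℤ) ^ (n + N + 1) := by
      rw [show (16 : ℤ) = 4 ^ 2 by norm_num, ← pow_mul]
      ring
    _ ≤ (15 * Δ ^ 2 * A ^ (n + N + 1) * (A + B) ^ (2 * (N + 1))) * (A : ℤ) ^ (n + N + 1) := by
      gcongr
    _ = _ := by ring

theorem remainder_eq (h : PadeAdmissible A B lam W Δ n N) (hB : 0 < B) (hBA : B < A)
    (hX : X * B ^ (n + N + 1) ≤ lam * A ^ (n + N + 1))
    (hE : 15 * (Y * A ^ (n + N + 1) - X * B ^ (n + N + 1)) ^ 2 ≤ W * (A : ℤ) ^ (n + N + 1)) :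
    (-1) ^ n * ((X : ℤ) * (A - B) ^ (2 * n + 1) * ratCoeff (A : ℤ) B N (n + 1) (n + 1)) =
      ratCoeff (A : ℤ) (A - B) n (n + 1) (N + 1) *
        (Y * A ^ (n + N + 1) - X * B ^ (n + N + 1)) :=
  pade_remainder_eq (by exact_mod_cast hB) (by exact_mod_cast hBA) (Int.natCast_nonneg X) h.dvd
    (h.two_mul_remainder_lt hB hBA hX) (h.two_mul_denominator_le hB hBA hE)

/-- The two approximants would give `Y Aᵐ - X Bᵐ` opposite signs. -/
theorem false_of_succ {Δ' : ℕ} (h : PadeAdmissible A B lam W Δ n (N + 1))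
    (h' : PadeAdmissible A B lam W Δ' (n + 1) N) (hB : 0 < B) (hBA : B < A) (hX : 0 < X)
    (hXB : X * B ^ (n + N + 2) ≤ lam * A ^ (n + N + 2))
    (hE : 15 * (Y * A ^ (n + N + 2) - X * B ^ (n + N + 2)) ^ 2 ≤ W * (A : ℤ) ^ (n + N + 2)) :
    False := by
  have h_exp : n + 1 + N + 1 = n + N + 2 := by ring
  have e := h.remainder_eq hB hBA hXB hE
  have e' := h'.remainder_eq (Y := Y) hB hBA (by rwa [h_exp]) (by rwa [h_exp])
  rw [h_exp] at e'
  rw [← add_assoc] at e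
  have hd : (0 : ℤ) < A - B := by rw [sub_pos]; exact_mod_cast hBA
  have hA : (0 : ℤ) < A := by exact_mod_cast hB.trans hBA
  have hq := ratCoeff_pos hA hd.le n n (N + 1 + 1)
  have hq' := ratCoeff_pos hA hd.le (n + 1) (n + 1) (N + 1)
  have hH := ratCoeff_pos hA (Int.natCast_nonneg B) (N + 1) n (n + 1)
  have hH' := ratCoeff_pos hA (Int.natCast_nonneg B) N (n + 1) (n + 1 + 1)
  have hR : 0 < (X : ℤ) * (A - B) ^ (2 * n + 1) * ratCoeff (A : ℤ) B (N + 1) (n + 1) (n + 1) := by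
    positivity
  have hR' : 0 < (X : ℤ) * (A - B) ^ (2 * (n + 1) + 1) *
      ratCoeff (A : ℤ) B N (n + 1 + 1) (n + 1 + 1) := by
    positivity
  rw [pow_succ] at e'
  change _ = _ * (Y * A ^ (n + N + 2) - X * B ^ (n + N + 2)) at e
  generalize Y * (A : ℤ) ^ (n + N + 2) - X * B ^ (n + N + 2) = D at *
  rcases neg_one_pow_eq_or ℤ n with h_sign | h_sign <;> rw [h_sign] at e e' <;> nlinarith

end PadeAdmissible

/-- Conditions making `(n, N + 1)` and `(n + 1, N)` both admissible with `Δ = 1`, for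
`m = n + N + 2` and any weight `W` with `4 W Cᵐ ≤ κ Aᵐ`. -/
def PadeGood (lam κ C A B n N : ℕ) : Prop :=
  2 * lam * (A - B) ^ (2 * n + 1) * (A + B) ^ (2 * n + N + 3) <
      (A * B) ^ (n + 1) * B ^ (n + N + 2) ∧
    κ * 16 ^ (n + 1) * A ^ (2 * (n + 1)) * (2 * A) ^ (2 * (N + 1)) ≤
      15 * C ^ (n + N + 2) * (A + B) ^ (2 * (N + 1))

instance (lam κ C A B n N : ℕ) : Decidable (PadeGood lam κ C A B n N) :=
  inferInstanceAs (Decidable (_ ∧ _))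

namespace PadeGood

variable {lam κ C A B X W n N : ℕ} {Y : ℤ}

theorem denominator_le (h : PadeGood lam κ C A B n N) (hC : 0 < C)
    (hW : 4 * W * C ^ (n + N + 2) ≤ κ * A ^ (n + N + 2)) :
    4 * W * 16 ^ (n + 1) * A ^ (2 * (n + 1)) * (2 * A) ^ (2 * (N + 1)) ≤
      15 * A ^ (n + N + 2) * (A + B) ^ (2 * (N + 1)) := by
  refine Nat.le_of_mul_le_mul_right ?_ (Nat.pow_pos hC : 0 < C ^ (n + N + 2))
  calc _ = 4 * W * C ^ (n + N + 2) *
        (16 ^ (n + 1) * A ^ (2 * (n + 1)) * (2 * A) ^ (2 * (N + 1))) := by ring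
    _ ≤ κ * A ^ (n + N + 2) *
        (16 ^ (n + 1) * A ^ (2 * (n + 1)) * (2 * A) ^ (2 * (N + 1))) := by gcongr
    _ = A ^ (n + N + 2) *
        (κ * 16 ^ (n + 1) * A ^ (2 * (n + 1)) * (2 * A) ^ (2 * (N + 1))) := by ring
    _ ≤ A ^ (n + N + 2) * (15 * C ^ (n + N + 2) * (A + B) ^ (2 * (N + 1))) :=
      Nat.mul_le_mul_left _ h.2
    _ = _ := by ring

theorem admissible_succ (h : PadeGood lam κ C A B n N) (hC : 0 < C)
    (hd : (A - B) ^ 2 * (A + B) ≤ A * B) (hW : 4 * W * C ^ (n + N + 2) ≤ κ * A ^ (n + N + 2)) :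
    PadeAdmissible A B lam W 1 (n + 1) N where
  dvd _ _ := one_dvd _
  remainder_lt := by
    have hAB : 0 < A * B := Nat.pos_of_ne_zero fun h_zero ↦ by
      have h_lt := h.1
      rw [h_zero] at h_lt
      simp at h_lt
    calc _ = 2 * lam * (A - B) ^ (2 * n + 1) * (A + B) ^ (2 * n + N + 3) *
          ((A - B) ^ 2 * (A + B)) := by ring
      _ ≤ 2 * lam * (A - B) ^ (2 * n + 1) * (A + B) ^ (2 * n + N + 3) * (A * B) := by gcongr
      _ < (A * B) ^ (n + 1) * B ^ (n + N + 2) * (A * B) := Nat.mul_lt_mul_of_pos_right h.1 hAB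
      _ = _ := by ring
  denominator_le := by
    convert h.denominator_le hC hW using 2
    ring

theorem admissible (h : PadeGood lam κ C A B n N) (hC : 0 < C) (hA : 0 < A)
    (hW : 4 * W * C ^ (n + N + 2) ≤ κ * A ^ (n + N + 2)) :
    PadeAdmissible A B lam W 1 n (N + 1) where
  dvd _ _ := one_dvd _
  remainder_lt := by
    rw [one_mul]
    exact h.1
  denominator_le := by
    refine le_of_mul_le_mul_left ?_ (by norm_num : 0 < 4)
    calc _ = 4 * W * 16 ^ (n + 1) * A ^ (2 * (n + 1)) * (2 * A) ^ (2 * (N + 1)) := by ring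
      _ ≤ 15 * A ^ (n + N + 2) * (A + B) ^ (2 * (N + 1)) := h.denominator_le hC hW
      _ ≤ 15 * A ^ (n + N + 2) * (A + B) ^ (2 * (N + 1)) * (4 * (A + B) ^ 2) :=
        Nat.le_mul_of_pos_right _ (by positivity)
      _ = _ := by ring

theorem false_of_sq_le (h : PadeGood lam κ C A B n N) (hC : 0 < C) (hB : 0 < B) (hBA : B < A)
    (hd : (A - B) ^ 2 * (A + B) ≤ A * B) (hX : 0 < X)
    (hXB : X * B ^ (n + N + 2) ≤ lam * A ^ (n + N + 2))
    (hW : 4 * W * C ^ (n + N + 2) ≤ κ * A ^ (n + N + 2))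
    (hE : 15 * (Y * A ^ (n + N + 2) - X * B ^ (n + N + 2)) ^ 2 ≤ W * (A : ℤ) ^ (n + N + 2)) :
    False :=
  (h.admissible hC (hB.trans hBA) hW).false_of_succ (h.admissible_succ hC hd hW) hB hBA hX hXB hE

end PadeGood

end Vanishing

section FiniteCertificates

theorem forall_ge_of_add_period {P : ℕ → Prop} {m₁ a m : ℕ} (ha : 0 < a)
    (base : ∀ i < a, P (m₁ + i)) (step : ∀ m, P m → P (m + a)) (hm : m₁ ≤ m) : P m := by
  obtain ⟨i, rfl⟩ := Nat.exists_eq_add_of_le hm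
  clear hm
  induction i using Nat.strong_induction_on with
  | _ i ih =>
    rcases lt_or_ge i a with hi | hi
    · exact base i hi
    · have h := step _ (ih (i - a) (by omega))
      rwa [add_assoc, Nat.sub_add_cancel hi] at h

/-- The condition under which `PadeGood` propagates from `(n, N)` to `(n + b, N + c)`. -/
def LadderStep (C A B b c : ℕ) : Prop :=
  (A - B) ^ (2 * b) * (A + B) ^ (2 * b + c) ≤ (A * B) ^ b * B ^ (b + c) ∧
    16 ^ b * A ^ (2 * b) * (2 * A) ^ (2 * c) ≤ C ^ (b + c) * (A + B) ^ (2 * c)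

instance (C A B b c : ℕ) : Decidable (LadderStep C A B b c) := inferInstanceAs (Decidable (_ ∧ _))

theorem PadeGood.add_ladderStep {lam κ C A B n N b c : ℕ} (hA : 0 < A) (hB : 0 < B)
    (h : PadeGood lam κ C A B n N) (hs : LadderStep C A B b c) :
    PadeGood lam κ C A B (n + b) (N + c) := by
  constructor
  · calc _ = 2 * lam * (A - B) ^ (2 * n + 1) * (A + B) ^ (2 * n + N + 3) *
          ((A - B) ^ (2 * b) * (A + B) ^ (2 * b + c)) := by ring
      _ ≤ 2 * lam * (A - B) ^ (2 * n + 1) * (A + B) ^ (2 * n + N + 3) *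
          ((A * B) ^ b * B ^ (b + c)) := Nat.mul_le_mul_left _ hs.1
      _ < (A * B) ^ (n + 1) * B ^ (n + N + 2) * ((A * B) ^ b * B ^ (b + c)) :=
        Nat.mul_lt_mul_of_pos_right h.1 (by positivity)
      _ = _ := by ring
  · calc _ = κ * 16 ^ (n + 1) * A ^ (2 * (n + 1)) * (2 * A) ^ (2 * (N + 1)) *
          (16 ^ b * A ^ (2 * b) * (2 * A) ^ (2 * c)) := by ring
      _ ≤ 15 * C ^ (n + N + 2) * (A + B) ^ (2 * (N + 1)) *
          (C ^ (b + c) * (A + B) ^ (2 * c)) := Nat.mul_le_mul h.2 hs.2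
      _ = _ := by ring

/-- A decidable certificate that every `m ≥ m₁` can be written as `n + N + 2` with `(n, N)` good.
The search for `n` is restricted to `w` consecutive values around `m / 3`. -/
def PadeLadder (lam κ C A B m₁ w : ℕ) : Prop :=
  ∃ s ∈ [(1, 2), (3, 5), (4, 7)], LadderStep C A B s.1 s.2 ∧
    ∀ i < s.1 + s.2, ∃ j < w, (m₁ + i) / 3 - 2 + j + 2 ≤ m₁ + i ∧
      PadeGood lam κ C A B ((m₁ + i) / 3 - 2 + j) (m₁ + i - ((m₁ + i) / 3 - 2 + j + 2))

instance (lam κ C A B m₁ w : ℕ) : Decidable (PadeLadder lam κ C A B m₁ w) :=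
  inferInstanceAs (Decidable (∃ s ∈ [(1, 2), (3, 5), (4, 7)], _))

theorem PadeLadder.exists_padeGood {lam κ C A B m₁ w m : ℕ} (h : PadeLadder lam κ C A B m₁ w)
    (hA : 0 < A) (hB : 0 < B) (hm : m₁ ≤ m) :
    ∃ n N, n + N + 2 = m ∧ PadeGood lam κ C A B n N := by
  obtain ⟨⟨b, c⟩, hs, h_step, h_base⟩ := h
  have h_pos : 0 < b + c := by
    simp only [List.mem_cons, Prod.mk.injEq, List.not_mem_nil, or_false] at hs
    omega
  refine forall_ge_of_add_period (P := fun m ↦ ∃ n N, n + N + 2 = m ∧ PadeGood lam κ C A B n N)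
    h_pos (fun i hi ↦ ?_) ?_ hm
  · obtain ⟨j, -, h_le, h_good⟩ := h_base i hi
    exact ⟨_, _, by omega, h_good⟩
  · rintro _ ⟨n, N, rfl, h_good⟩
    exact ⟨n + b, N + c, by ring, h_good.add_ladderStep hA hB h_step⟩

theorem mul_pow_le_two_mul_pow {A B X m : ℕ} (hB : 0 < B)
    (h : 15 * ((A : ℤ) ^ m - X * (B : ℤ) ^ m) ^ 2 ≤ X * (A : ℤ) ^ m) :
    X * B ^ m ≤ 2 * A ^ m := by
  by_contra! hc
  zify at hc
  have hv : 1 ≤ (B : ℤ) ^ m := by exact_mod_cast Nat.one_le_pow _ _ hB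
  have hu : 0 ≤ (A : ℤ) ^ m := by positivity
  generalize (A : ℤ) ^ m = u at *
  generalize (B : ℤ) ^ m = v at *
  have h_mul : (X : ℤ) * u ≤ X * v * u := by nlinarith [mul_nonneg (Int.natCast_nonneg X) hu]
  nlinarith

/-- A weight `w` for lower bounds `w(X) Aᵐ < 15 (Aᵐ - X Bᵐ)²`. Only `w(X) = X` and `w(X) = 1` are
needed. -/
structure IsErrorWeight (w : ℕ → ℕ) : Prop where
  monotone : Monotone w
  add_le : ∀ i j, w (i + j) ≤ w i + j
  le_self : ∀ {i}, 0 < i → w i ≤ i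

theorem isErrorWeight_id : IsErrorWeight fun X ↦ X :=
  ⟨monotone_id, fun _ _ ↦ le_rfl, fun _ ↦ le_rfl⟩

theorem isErrorWeight_one : IsErrorWeight fun _ ↦ 1 :=
  ⟨monotone_const, fun _ _ ↦ Nat.le_add_right _ _, fun h ↦ h⟩

/-- A decidable way of saying that no multiple `X v` is close to `u`: only the two multiples
adjacent to `u` are tested. -/
def NoNearMultiple (w : ℕ → ℕ) (u v : ℕ) : Prop :=
  w (u / v) * u < 15 * (u % v) ^ 2 ∧ w (u / v + 1) * u < 15 * (v - u % v) ^ 2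

instance (w : ℕ → ℕ) (u v : ℕ) : Decidable (NoNearMultiple w u v) :=
  inferInstanceAs (Decidable (_ ∧ _))

theorem NoNearMultiple.lt_sq {w : ℕ → ℕ} {u v : ℕ} (h : NoNearMultiple w u v)
    (hw : IsErrorWeight w) (hv : 0 < v) (huv : u ≤ v ^ 2) (X : ℕ) :
    (w X * u : ℤ) < 15 * ((u : ℤ) - X * v) ^ 2 := by
  obtain ⟨h_below, h_above⟩ := h
  have h_div := Nat.div_add_mod u v
  obtain ⟨s, hs⟩ := Nat.exists_eq_add_of_lt (Nat.mod_lt u hv)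
  set x := u / v
  set r := u % v
  rw [show v - r = s + 1 by omega] at h_above
  zify at h_below h_above huv hs h_div
  rcases Nat.lt_or_ge x X with hx | hx
  · obtain ⟨j, rfl⟩ := Nat.exists_eq_add_of_le hx
    have hw_le : (w (x + 1 + j) : ℤ) ≤ w (x + 1) + j := by exact_mod_cast hw.add_le _ _
    have hj_sq : (j : ℤ) ≤ j ^ 2 := by exact_mod_cast Nat.le_self_pow two_ne_zero j
    have h_cross : (0 : ℤ) ≤ j * (s + 1) * v := by positivity
    have h_sq : (j * u : ℤ) ≤ j ^ 2 * v ^ 2 := by gcongr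
    calc (w (x + 1 + j) * u : ℤ) ≤ (w (x + 1) + j) * u := by gcongr
      _ < 15 * ((s + 1) + j * v) ^ 2 := by nlinarith [sq_nonneg ((j : ℤ) * v)]
      _ = _ := by
        rw [← h_div, hs]
        push_cast
        ring
  · obtain ⟨j, hj⟩ := Nat.exists_eq_add_of_le hx
    have hw_le : (w X : ℤ) ≤ w x := by exact_mod_cast hw.monotone hx
    calc (w X * u : ℤ) ≤ w x * u := by gcongr
      _ < 15 * r ^ 2 := h_below
      _ ≤ 15 * (r + j * v) ^ 2 := by gcongr; exact le_add_of_nonneg_right (by positivity)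
      _ = _ := by
        rw [← h_div, hj]
        push_cast
        ring

/-- A decidable certificate that `15 (Aᵐ - X Bᵐ)² > w(X) Aᵐ` for all `m ≥ 2` and `X > 0`. The
values `m < m₁` are enumerated by `List.all`, which the kernel evaluates without deep recursion. -/
def GapCertificate (w : ℕ → ℕ) (κ C A B m₁ k : ℕ) : Prop :=
  0 < B ∧ B < A ∧ (A - B) ^ 2 * (A + B) ≤ A * B ∧ A ≤ B ^ 2 ∧
    ((List.range m₁).all fun m ↦ m < 2 ∨ NoNearMultiple w (A ^ m) (B ^ m)) ∧
    PadeLadder 2 κ C A B m₁ k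

instance (w : ℕ → ℕ) (κ C A B m₁ k : ℕ) : Decidable (GapCertificate w κ C A B m₁ k) :=
  inferInstanceAs (Decidable (_ ∧ _))

theorem GapCertificate.lt_sq {w : ℕ → ℕ} {κ C A B m₁ k X m : ℕ}
    (h : GapCertificate w κ C A B m₁ k) (hw : IsErrorWeight w) (hC : 0 < C)
    (hκ : X * B ^ m ≤ 2 * A ^ m → 4 * w X * C ^ m ≤ κ * A ^ m) (hm : 2 ≤ m) (hX : 0 < X) :
    (w X * A ^ m : ℤ) < 15 * ((A : ℤ) ^ m - X * (B : ℤ) ^ m) ^ 2 := by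
  obtain ⟨hB, hBA, hd, hAB, h_direct, h_ladder⟩ := h
  rcases lt_or_ge m m₁ with hlt | hge
  · have huv : A ^ m ≤ (B ^ m) ^ 2 := by
      rw [← pow_mul, mul_comm, pow_mul]
      gcongr
    have h_none := of_decide_eq_true (List.all_eq_true.1 h_direct m (List.mem_range.2 hlt))
    exact_mod_cast (h_none.resolve_left hm.not_gt).lt_sq hw (by positivity) huv X
  · by_contra! hE
    obtain ⟨n, N, rfl, h_good⟩ := h_ladder.exists_padeGood (hB.trans hBA) hB hge
    have hwX : (w X : ℤ) ≤ X := by exact_mod_cast hw.le_self hX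
    have hXB := mul_pow_le_two_mul_pow hB (hE.trans (by gcongr))
    exact h_good.false_of_sq_le (Y := 1) (W := w X) hC hB hBA hd hX hXB (hκ hXB)
      (by rwa [one_mul])

theorem gapCertificate_id_of_lt_257 : ∀ i < 232, ∀ d < 3, 16 * (d + 1) ^ 2 < 25 + i →
    GapCertificate (fun X ↦ X) 8 (25 + i - (d + 1)) (25 + i) (25 + i - (d + 1)) 40 8 := by
  decide +kernel

theorem gapCertificate_one_18 : GapCertificate (fun _ ↦ 1) 4 18 18 17 4500 4 := by decide +kernel

theorem gapCertificate_one_of_lt_25 : ∀ i < 6,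
    GapCertificate (fun _ ↦ 1) 4 (19 + i) (19 + i) (18 + i) 110 4 := by
  decide +kernel

theorem mul_pow_lt_sq_of_lt_257 {A B X m : ℕ} (hA : 25 ≤ A) (hA' : A < 257) (hBA : B < A)
    (hd : 16 * (A - B) ^ 2 < A) (hm : 2 ≤ m) (hX : 0 < X) :
    (X * A ^ m : ℤ) < 15 * ((A : ℤ) ^ m - X * (B : ℤ) ^ m) ^ 2 := by
  obtain ⟨i, rfl⟩ := Nat.exists_eq_add_of_le hA
  obtain ⟨d, hdB⟩ := Nat.exists_eq_add_of_lt hBA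
  have h_sub : 25 + i - B = d + 1 := by omega
  rw [h_sub] at hd
  have hd3 : d < 3 := by nlinarith
  have h := gapCertificate_id_of_lt_257 i (by omega) d hd3 hd
  rw [show 25 + i - (d + 1) = B by omega] at h
  exact h.lt_sq isErrorWeight_id h.1 (fun h_le ↦ by linarith) hm hX

theorem pow_lt_sq_of_lt_25 {A X m : ℕ} (hA : 18 ≤ A) (hA' : A < 25) (hm : 2 ≤ m) (hX : 0 < X) :
    (A ^ m : ℤ) < 15 * ((A : ℤ) ^ m - X * ((A - 1 : ℕ) : ℤ) ^ m) ^ 2 := by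
  obtain ⟨m₁, h⟩ : ∃ m₁, GapCertificate (fun _ ↦ 1) 4 A A (A - 1) m₁ 4 := by
    rcases hA.eq_or_lt with rfl | hA
    · exact ⟨_, gapCertificate_one_18⟩
    · obtain ⟨i, rfl⟩ := Nat.exists_eq_add_of_le hA
      exact ⟨_, by convert gapCertificate_one_of_lt_25 i (by omega) using 1; omega⟩
  have := h.lt_sq isErrorWeight_one (by omega) (fun _ ↦ le_rfl) hm hX
  rwa [Nat.cast_one, one_mul] at this

end FiniteCertificates

section LargeBase

variable {A B X d m n l : ℕ}

theorem pow_le_sq_pow_sub_pow (hBA : B < A) (hm : 2 ≤ m) :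
    (A ^ m : ℤ) ≤ ((A : ℤ) ^ m - (B : ℤ) ^ m) ^ 2 := by
  obtain ⟨j, rfl⟩ := Nat.exists_eq_add_of_le' hm
  zify at hBA
  have h_gap : (A : ℤ) ^ (j + 1) ≤ (A : ℤ) ^ (j + 2) - (B : ℤ) ^ (j + 2) := by
    have h_pow : (B : ℤ) ^ (j + 1) * B ≤ (A : ℤ) ^ (j + 1) * (A - 1) := by
      gcongr
      exact Int.le_sub_one_of_lt hBA
    linarith [pow_succ (A : ℤ) (j + 1), pow_succ (B : ℤ) (j + 1)]
  calc (A : ℤ) ^ (j + 2) ≤ (A : ℤ) ^ ((j + 1) * 2) := pow_le_pow_right₀ (by linarith) (by omega)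
    _ = ((A : ℤ) ^ (j + 1)) ^ 2 := pow_mul _ _ _
    _ ≤ _ := pow_le_pow_left₀ (by positivity) h_gap 2

theorem mul_pow_lt_mul_pow_of_two_le (hB : 240 ≤ B) (hm : m ≠ 0) (hX : 2 ≤ X)
    (hE : 15 * ((A : ℤ) ^ m - X * (B : ℤ) ^ m) ^ 2 ≤ X * (A : ℤ) ^ m) :
    20 * B ^ m < 11 * A ^ m := by
  have hv : (240 : ℤ) ≤ (B : ℤ) ^ m := by exact_mod_cast hB.trans (Nat.le_self_pow hm B)
  have hu : 0 ≤ (A : ℤ) ^ m := by positivity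
  zify at hX ⊢
  generalize (A : ℤ) ^ m = u at *
  generalize (B : ℤ) ^ m = v at *
  by_contra! hc
  have h_double : 20 * v ≤ 10 * (X * v) := by nlinarith
  have h_weight : (X : ℤ) * u * 240 ≤ X * v * u := by
    nlinarith [mul_nonneg (by linarith : (0 : ℤ) ≤ X) hu]
  generalize (X : ℤ) * v = w at *
  nlinarith

theorem twenty_le_of_pow_lt (hBA : 63 * A ≤ 64 * B) (h : 20 * B ^ m < 11 * A ^ m) : 20 ≤ m := by
  by_contra! hm
  have h_numeric : ∀ m < 20, 11 * 64 ^ m ≤ 20 * 63 ^ m := by decide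
  refine lt_irrefl (63 ^ m * (11 * A ^ m)) ?_
  calc 63 ^ m * (11 * A ^ m) = 11 * (63 * A) ^ m := by ring
    _ ≤ 11 * (64 * B) ^ m := by gcongr
    _ = 11 * 64 ^ m * B ^ m := by ring
    _ ≤ 20 * 63 ^ m * B ^ m := Nat.mul_le_mul_right _ (h_numeric m hm)
    _ = 63 ^ m * (20 * B ^ m) := by ring
    _ < 63 ^ m * (11 * A ^ m) := by gcongr

/-- Numerical conditions on `n` and `l` making `(n, n + l)` a good pair in the sense of `PadeGood`
whenever `256 ≤ A` and `63 / 64 ≤ B / A`. -/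
def LargeBaseExponents (n l : ℕ) : Prop :=
  127 ^ (3 * n + l + 3) ≤ 63 ^ (3 * n + l + 3) * 16 ^ (n + 1) ∧
    8 * 16 ^ (n + 1) * 128 ^ (2 * (n + l + 1)) * 64 ^ (2 * n + l + 2) ≤
      15 * 127 ^ (2 * (n + l + 1)) * 63 ^ (2 * n + l + 2) * 256 ^ l

instance (n l : ℕ) : Decidable (LargeBaseExponents n l) := inferInstanceAs (Decidable (_ ∧ _))

theorem LargeBaseExponents.add (h : LargeBaseExponents n l) :
    LargeBaseExponents (n + 7) (l + 6) := by
  refine ⟨?_, ?_⟩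
  · calc _ = 127 ^ (3 * n + l + 3) * 127 ^ 27 := by ring
      _ ≤ 63 ^ (3 * n + l + 3) * 16 ^ (n + 1) * (63 ^ 27 * 16 ^ 7) :=
        Nat.mul_le_mul h.1 (by norm_num)
      _ = _ := by ring
  · calc _ = 8 * 16 ^ (n + 1) * 128 ^ (2 * (n + l + 1)) * 64 ^ (2 * n + l + 2) *
          (16 ^ 7 * 128 ^ 26 * 64 ^ 20) := by ring
      _ ≤ 15 * 127 ^ (2 * (n + l + 1)) * 63 ^ (2 * n + l + 2) * 256 ^ l *
          (127 ^ 26 * 63 ^ 20 * 256 ^ 6) := Nat.mul_le_mul h.2 (by norm_num)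
      _ = _ := by ring

theorem exists_largeBaseExponents (hm : 20 ≤ m) :
    ∃ n l, 2 * n + l + 2 = m ∧ LargeBaseExponents n l := by
  refine forall_ge_of_add_period (P := fun m ↦ ∃ n l, 2 * n + l + 2 = m ∧ LargeBaseExponents n l)
    (a := 20) (by norm_num) (fun i hi ↦ ?_) ?_ hm
  · have h_base : ∀ i < 20, ∃ n < 15, ∃ l < 20, 2 * n + l + 2 = 20 + i ∧
        LargeBaseExponents n l := by
      decide +kernel
    obtain ⟨n, -, l, -, h⟩ := h_base i hi
    exact ⟨n, l, h⟩
  · rintro _ ⟨n, l, rfl, h⟩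
    exact ⟨n + 7, l + 6, by ring, h.add⟩

theorem LargeBaseExponents.remainder_lt (h : LargeBaseExponents n l) (hd : 16 * d ^ 2 < B + d)
    (hd' : 64 * d < B + d) :
    4 * d ^ (2 * n + 1) * (B + d + B) ^ (3 * n + l + 3) <
      ((B + d) * B) ^ (n + 1) * B ^ (2 * n + l + 2) := by
  have h_exp := h.1
  have hB : 0 < B := by omega
  have h_sum : (B + d + B) ^ (3 * n + l + 3) * 63 ^ (3 * n + l + 3) ≤
      127 ^ (3 * n + l + 3) * B ^ (3 * n + l + 3) := by
    rw [← mul_pow, ← mul_pow]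
    gcongr 1
    omega
  have h_diff : 4 * d ^ (2 * n + 1) * 16 ^ (n + 1) < (B + d) ^ (n + 1) := by
    calc 4 * d ^ (2 * n + 1) * 16 ^ (n + 1) = 64 * d * (16 * d ^ 2) ^ n := by ring
      _ ≤ 64 * d * (B + d) ^ n := by gcongr
      _ < (B + d) * (B + d) ^ n := by gcongr
      _ = (B + d) ^ (n + 1) := by ring
  refine lt_of_mul_lt_mul_right (a := 63 ^ (3 * n + l + 3)) ?_ (Nat.zero_le _)
  calc 4 * d ^ (2 * n + 1) * (B + d + B) ^ (3 * n + l + 3) * 63 ^ (3 * n + l + 3)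
      = 4 * d ^ (2 * n + 1) * ((B + d + B) ^ (3 * n + l + 3) * 63 ^ (3 * n + l + 3)) := by ring
    _ ≤ 4 * d ^ (2 * n + 1) * (127 ^ (3 * n + l + 3) * B ^ (3 * n + l + 3)) := by gcongr
    _ ≤ 4 * d ^ (2 * n + 1) *
        (63 ^ (3 * n + l + 3) * 16 ^ (n + 1) * B ^ (3 * n + l + 3)) := by gcongr
    _ = 4 * d ^ (2 * n + 1) * 16 ^ (n + 1) * (63 ^ (3 * n + l + 3) * B ^ (3 * n + l + 3)) := by
      ring
    _ < (B + d) ^ (n + 1) * (63 ^ (3 * n + l + 3) * B ^ (3 * n + l + 3)) := by gcongr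
    _ = _ := by rw [mul_pow]; ring

theorem LargeBaseExponents.denominator_le (h : LargeBaseExponents n l) (hA : 256 ≤ A)
    (hBA : 63 * A ≤ 64 * B) :
    8 * 16 ^ (n + 1) * A ^ (2 * (n + 1)) * (2 * A) ^ (2 * (n + l + 1)) ≤
      15 * B ^ (2 * n + l + 2) * (A + B) ^ (2 * (n + l + 1)) := by
  have h_exp := h.2
  have h_sum : (2 * A) ^ (2 * (n + l + 1)) * 127 ^ (2 * (n + l + 1)) ≤
      128 ^ (2 * (n + l + 1)) * (A + B) ^ (2 * (n + l + 1)) := by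
    rw [← mul_pow, ← mul_pow]
    gcongr 1
    omega
  have h_ratio : 63 ^ (2 * n + l + 2) * A ^ (2 * n + l + 2) ≤
      64 ^ (2 * n + l + 2) * B ^ (2 * n + l + 2) := by
    rw [← mul_pow, ← mul_pow]
    gcongr 1
  have h_pow : A ^ (2 * (n + 1)) * 256 ^ l ≤ A ^ (2 * n + l + 2) := by
    calc _ ≤ A ^ (2 * (n + 1)) * A ^ l := by gcongr
      _ = A ^ (2 * n + l + 2) := by ring
  refine le_of_mul_le_mul_right ?_
    (by positivity : 0 < 127 ^ (2 * (n + l + 1)) * 63 ^ (2 * n + l + 2) * 256 ^ l)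
  generalize (2 * A) ^ (2 * (n + l + 1)) = a at *
  generalize (A + B) ^ (2 * (n + l + 1)) = s at *
  generalize 2 * n + l + 2 = m at *
  calc _ = 8 * 16 ^ (n + 1) * (A ^ (2 * (n + 1)) * 256 ^ l) *
        (a * 127 ^ (2 * (n + l + 1))) * 63 ^ m := by ring
    _ ≤ 8 * 16 ^ (n + 1) * A ^ m * (128 ^ (2 * (n + l + 1)) * s) * 63 ^ m := by gcongr
    _ = 8 * 16 ^ (n + 1) * (128 ^ (2 * (n + l + 1)) * s) * (63 ^ m * A ^ m) := by ring
    _ ≤ 8 * 16 ^ (n + 1) * (128 ^ (2 * (n + l + 1)) * s) * (64 ^ m * B ^ m) := by gcongr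
    _ = 8 * 16 ^ (n + 1) * 128 ^ (2 * (n + l + 1)) * 64 ^ m * (B ^ m * s) := by ring
    _ ≤ 15 * 127 ^ (2 * (n + l + 1)) * 63 ^ m * 256 ^ l * (B ^ m * s) := by gcongr
    _ = _ := by ring

theorem exists_padeGood_of_256_le (hA : 256 ≤ A) (hBA : B ≤ A) (hd : 16 * (A - B) ^ 2 < A)
    (hm : 20 ≤ m) : ∃ n N, n + N + 2 = m ∧ PadeGood 2 8 B A B n N := by
  obtain ⟨d, rfl⟩ := Nat.exists_eq_add_of_le hBA
  rw [Nat.add_sub_cancel_left] at hd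
  have hd' : 64 * d < B + d := by nlinarith
  obtain ⟨n, l, h_sum, h⟩ := exists_largeBaseExponents hm
  have h_exp : n + (n + l) + 2 = 2 * n + l + 2 := by ring
  refine ⟨n, n + l, by omega, ?_, ?_⟩
  · rw [Nat.add_sub_cancel_left, h_exp, show 2 * n + (n + l) + 3 = 3 * n + l + 3 by ring]
    exact h.remainder_lt hd hd'
  · rw [h_exp]
    exact h.denominator_le hA (by omega)

theorem mul_pow_lt_sq_of_256_le (hA : 256 ≤ A) (hBA : B < A) (hd : 16 * (A - B) ^ 2 < A)
    (hm : 2 ≤ m) (hX : 0 < X) :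
    (X * A ^ m : ℤ) < 15 * ((A : ℤ) ^ m - X * (B : ℤ) ^ m) ^ 2 := by
  rcases Nat.eq_or_lt_of_le hX with rfl | hX2
  · have hA_pos : (0 : ℤ) < A ^ m := by positivity
    have := pow_le_sq_pow_sub_pow hBA hm
    simp only [Nat.cast_one, one_mul]
    linarith
  · by_contra! hE
    have h_diff : 64 * (A - B) < A := by nlinarith
    have hB : 240 ≤ B := by omega
    have hdd : (A - B) ^ 2 * (A + B) ≤ A * B := by
      calc (A - B) ^ 2 * (A + B) ≤ (A - B) ^ 2 * (16 * B) := by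
            gcongr
            omega
        _ = 16 * (A - B) ^ 2 * B := by ring
        _ ≤ A * B := by gcongr
    have hm20 := twenty_le_of_pow_lt (by omega)
      (mul_pow_lt_mul_pow_of_two_le hB (by omega) hX2 hE)
    obtain ⟨n, N, rfl, h_good⟩ := exists_padeGood_of_256_le hA hBA.le hd hm20
    have hXB := mul_pow_le_two_mul_pow (by omega) hE
    exact h_good.false_of_sq_le (Y := 1) (W := X) (by omega) (by omega) hBA hdd hX hXB
      (by rw [mul_assoc]; omega) (by rwa [one_mul])

theorem mul_pow_lt_sq (hA : 25 ≤ A) (hBA : B < A) (hd : 16 * (A - B) ^ 2 < A) (hm : 2 ≤ m)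
    (hX : 0 < X) : (X * A ^ m : ℤ) < 15 * ((A : ℤ) ^ m - X * (B : ℤ) ^ m) ^ 2 := by
  rcases lt_or_ge A 257 with hlt | hge
  · exact mul_pow_lt_sq_of_lt_257 hA hlt hBA hd hm hX
  · exact mul_pow_lt_sq_of_256_le (by omega) hBA hd hm hX

theorem pow_lt_sq (hA : 18 ≤ A) (hBA : B < A) (hd : 16 * (A - B) ^ 2 < A) (hm : 2 ≤ m)
    (hX : 0 < X) : (A ^ m : ℤ) < 15 * ((A : ℤ) ^ m - X * (B : ℤ) ^ m) ^ 2 := by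
  rcases lt_or_ge A 25 with hlt | hge
  · have hAB : A - B = 1 := by
      have : A - B < 2 := by nlinarith
      omega
    obtain rfl : B = A - 1 := by omega
    exact pow_lt_sq_of_lt_25 hA hlt hm hX
  · refine lt_of_le_of_lt ?_ (mul_pow_lt_sq hge hBA hd hm hX)
    exact le_mul_of_one_le_left (by positivity) (by exact_mod_cast hX)

end LargeBase

section FareyGap

theorem le_mul_sub_mul {α β δ : ℝ} {P Q m y : ℕ} (hδ : 0 ≤ δ) (hQ : 0 < Q) (hm : 0 < m)
    (h : δ * Q ≤ Q * α - P * β) (h_le : (y * Q : ℝ) * β ≤ P * m * β) : δ ≤ m * α - y * β := by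
  have hm_one : (1 : ℝ) ≤ m := by exact_mod_cast hm
  refine le_of_mul_le_mul_right ?_ (by exact_mod_cast hQ : (0 : ℝ) < Q)
  calc δ * Q ≤ m * (δ * Q) := le_mul_of_one_le_left (by positivity) hm_one
    _ ≤ m * (Q * α - P * β) := by gcongr
    _ = m * α * Q - P * m * β := by ring
    _ ≤ m * α * Q - y * Q * β := by gcongr
    _ = (m * α - y * β) * Q := by ring

/-- `α / β` lies strictly between the Farey neighbours `P₁ / Q₁` and `P₂ / Q₂`, and every other
fraction between these two has denominator at least `Q₁ + Q₂`. -/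
theorem le_abs_mul_sub_mul_of_lt_add {α β δ : ℝ} {P₁ Q₁ P₂ Q₂ m y : ℕ} (hβ : 0 ≤ β) (hδ : 0 ≤ δ)
    (hQ₁ : 0 < Q₁) (hQ₂ : 0 < Q₂) (h_det : P₂ * Q₁ = P₁ * Q₂ + 1) (hm : 0 < m)
    (hm_lt : m < Q₁ + Q₂) (h₁ : δ * Q₁ ≤ Q₁ * α - P₁ * β) (h₂ : δ * Q₂ ≤ P₂ * β - Q₂ * α) :
    δ ≤ |m * α - y * β| := by
  by_cases h_left : y * Q₁ ≤ P₁ * m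
  · have h_left : (y * Q₁ : ℝ) ≤ P₁ * m := by exact_mod_cast h_left
    exact (le_mul_sub_mul hδ hQ₁ hm h₁ (by gcongr)).trans (le_abs_self _)
  by_cases h_right : P₂ * m ≤ y * Q₂
  · have h_right : (P₂ * m : ℝ) ≤ y * Q₂ := by exact_mod_cast h_right
    have h := le_mul_sub_mul (α := -α) (β := -β) (P := P₂) (y := y) hδ hQ₂ hm (by linarith)
      (by linarith [mul_le_mul_of_nonneg_right h_right hβ])
    exact (h.trans_eq (by ring)).trans (neg_le_abs _)
  have h_upper := Nat.mul_le_mul_right Q₂ (Nat.lt_of_not_le h_left)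
  have h_lower := Nat.mul_le_mul_right Q₁ (Nat.lt_of_not_le h_right)
  have h_cross : P₂ * m * Q₁ = P₁ * m * Q₂ + m := by linear_combination m * h_det
  linarith [h_upper, h_lower]

theorem inv_le_mul_log_sub_mul_log {a b K P Q : ℕ} (hb : 0 < b) (hK : 0 < K)
    (h : b ^ P * (K + 1) ≤ a ^ Q * K) :
    ((K : ℝ) + 1)⁻¹ ≤ Q * Real.log a - P * Real.log b := by
  have hK' : (0 : ℝ) < K := by exact_mod_cast hK
  have h_pos : (0 : ℝ) < (K + 1) / K := by positivity
  have h_ratio : ((K : ℝ) + 1) / K ≤ a ^ Q / b ^ P := by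
    rw [div_le_div_iff₀ hK' (by positivity), mul_comm]
    exact_mod_cast h
  have ha : (0 : ℝ) < a ^ Q := by
    have := h_pos.trans_le h_ratio
    rw [div_pos_iff_of_pos_right (by positivity)] at this
    exact this
  calc ((K : ℝ) + 1)⁻¹ = 1 - (((K : ℝ) + 1) / K)⁻¹ := by field_simp; ring
    _ ≤ Real.log (((K : ℝ) + 1) / K) := Real.one_sub_inv_le_log_of_pos h_pos
    _ ≤ Real.log (a ^ Q / b ^ P) := Real.log_le_log h_pos h_ratio
    _ = Q * Real.log a - P * Real.log b := by
      rw [Real.log_div ha.ne' (by positivity), Real.log_pow, Real.log_pow]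

theorem abs_log_sub_log_mul_min_le {a w : ℝ} (ha : 0 < a) (hw : 0 < w) :
    |Real.log a - Real.log w| * min a w ≤ |a - w| := by
  wlog h : w ≤ a generalizing a w
  · rw [abs_sub_comm, min_comm, abs_sub_comm a]
    exact this hw ha (not_le.1 h).le
  rw [min_eq_right h, abs_of_nonneg (sub_nonneg.2 (Real.log_le_log hw h)),
    abs_of_nonneg (sub_nonneg.2 h), ← Real.log_div ha.ne' hw.ne', ← le_div_iff₀ hw, sub_div,
    div_self hw.ne']
  exact Real.log_le_sub_one_of_pos (by positivity)

theorem mul_sq_log_sub_log_le_one {a w : ℝ} (ha : 1 ≤ a) (hw : 0 < w)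
    (h : 15 * (a - w) ^ 2 ≤ a) : a * (Real.log a - Real.log w) ^ 2 ≤ 1 := by
  have h_half : a / 2 ≤ min a w := by
    refine le_min (by linarith) ?_
    by_contra! h_lt
    nlinarith
  have h_abs : |Real.log a - Real.log w| * (a / 2) ≤ |a - w| :=
    (by gcongr : _ ≤ _).trans (abs_log_sub_log_mul_min_le (by linarith) hw)
  have h_sq := pow_le_pow_left₀ (by positivity) h_abs 2
  rw [mul_pow, sq_abs, sq_abs] at h_sq
  refine le_of_mul_le_mul_right ?_ (by linarith : 0 < a)
  nlinarith

theorem two_pow_mul_lt_seventeen_pow_mul : 2 ^ 149875 * (2 ^ 24 + 1) < 17 ^ 36667 * 2 ^ 24 := by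
  decide +kernel

theorem seventeen_pow_mul_lt_two_pow_mul :
    17 ^ 2342652 * (2 ^ 17 + 1) < 2 ^ 9575503 * 2 ^ 17 := by
  decide +kernel

/-- The fractions `149875 / 36667` and `9575503 / 2342652` come from the continued fraction of
`log 17 / log 2`. -/
theorem two_pow_neg_forty_le_abs_mul_log_sub {m y : ℕ} (hm : 0 < m) (hm_lt : m < 2379319) :
    ((2 : ℝ) ^ 40)⁻¹ ≤ |m * Real.log 17 - y * Real.log 2| := by
  have h₁ := inv_le_mul_log_sub_mul_log (by norm_num) (by norm_num)
    two_pow_mul_lt_seventeen_pow_mul.le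
  have h₂ := inv_le_mul_log_sub_mul_log (by norm_num) (by norm_num)
    seventeen_pow_mul_lt_two_pow_mul.le
  refine le_abs_mul_sub_mul_of_lt_add (P₁ := 149875) (Q₁ := 36667) (P₂ := 9575503)
    (Q₂ := 2342652) (Real.log_nonneg (by norm_num)) (by positivity) (by norm_num) (by norm_num)
    (by norm_num) hm hm_lt ((by norm_num : _ ≤ _).trans h₁) ((by norm_num : _ ≤ _).trans h₂)

end FareyGap

section SmallPowersOfSeventeen

variable {m y : ℕ}

theorem four_mul_le_of_sq_le (hm : 0 < m) (hE : 15 * ((17 : ℤ) ^ m - 2 ^ y) ^ 2 ≤ 17 ^ m) :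
    4 * m ≤ y := by
  by_contra! h_lt
  have h_half : 2 * (2 : ℤ) ^ y ≤ 17 ^ m := by
    calc 2 * (2 : ℤ) ^ y = 2 ^ (y + 1) := (pow_succ' _ _).symm
      _ ≤ 2 ^ (4 * m) := pow_le_pow_right₀ (by norm_num) h_lt
      _ = 16 ^ m := by rw [pow_mul]; norm_num
      _ ≤ 17 ^ m := by gcongr; norm_num
  have h_ge : (17 : ℤ) ≤ 17 ^ m := le_self_pow₀ (by norm_num) hm.ne'
  nlinarith

theorem noNearMultiple_seventeen_pow : ∀ i < 18,
    NoNearMultiple (fun _ ↦ 1) (17 ^ (2 + i)) (16 ^ (2 + i)) := by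
  decide +kernel

theorem seventeen_pow_lt_sq_of_lt_twenty (hm : 2 ≤ m) (hm_lt : m < 20) :
    (17 : ℤ) ^ m < 15 * ((17 : ℤ) ^ m - 2 ^ y) ^ 2 := by
  by_contra! hE
  obtain ⟨j, rfl⟩ := Nat.exists_eq_add_of_le (four_mul_le_of_sq_le (by omega) hE)
  obtain ⟨i, rfl⟩ := Nat.exists_eq_add_of_le hm
  have huv : 17 ^ (2 + i) ≤ (16 ^ (2 + i)) ^ 2 := by
    rw [← pow_mul, mul_comm, pow_mul]
    gcongr
    norm_num
  have h_lt := (noNearMultiple_seventeen_pow i (by omega)).lt_sq isErrorWeight_one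
    (by positivity) huv (2 ^ j)
  have h_pow : (2 : ℤ) ^ (4 * (2 + i) + j) = 2 ^ j * 16 ^ (2 + i) := by
    rw [pow_add, pow_mul, mul_comm]
    norm_num
  rw [h_pow] at hE
  push_cast at h_lt
  linarith

theorem seventeen_pow_lt_sq_of_lt_2379319 (hm : 2 ≤ m) (hm_lt : m < 2379319) :
    (17 : ℤ) ^ m < 15 * ((17 : ℤ) ^ m - 2 ^ y) ^ 2 := by
  rcases lt_or_ge m 20 with h_small | h_large
  · exact seventeen_pow_lt_sq_of_lt_twenty hm h_small
  by_contra! hE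
  have h_gap := two_pow_neg_forty_le_abs_mul_log_sub (y := y) (by omega) hm_lt
  have h_close := mul_sq_log_sub_log_le_one (a := 17 ^ m) (w := 2 ^ y)
    (one_le_pow₀ (by norm_num)) (by positivity) (by exact_mod_cast hE)
  rw [Real.log_pow, Real.log_pow, ← sq_abs] at h_close
  refine absurd h_close (not_le.2 ?_)
  calc (1 : ℝ) < 17 ^ 20 * ((2 ^ 40)⁻¹) ^ 2 := by norm_num
    _ ≤ 17 ^ m * |m * Real.log 17 - y * Real.log 2| ^ 2 := by
      gcongr
      norm_num

end SmallPowersOfSeventeen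

section Chebyshev

open ArithmeticFunction Chebyshev Finset

theorem log_factorial_eq_sum_vonMangoldt {N k : ℕ} (hk : k ≤ N) :
    Real.log k.factorial = ∑ d ∈ Ioc 0 N, vonMangoldt d * (k / d : ℕ) := by
  have h_sum := sum_Ioc_mul_zeta_eq_sum vonMangoldt k
  rw [vonMangoldt_mul_zeta] at h_sum
  calc Real.log k.factorial = ∑ n ∈ Ioc 0 k, Real.log n := by
        rw [← prod_Ico_id_eq_factorial, Nat.cast_prod, Real.log_prod]
        · rfl
        · intro i hi
          have := (mem_Ico.1 hi).1
          positivity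
    _ = ∑ d ∈ Ioc 0 k, vonMangoldt d * (k / d : ℕ) := h_sum
    _ = _ := by
      refine sum_subset (Ioc_subset_Ioc_right hk) fun d hd hdk ↦ ?_
      rw [mem_Ioc] at hd hdk
      rw [Nat.div_eq_of_lt (by omega), Nat.cast_zero, mul_zero]

/-- Chebyshev's combination `log (N! ⌊N/30⌋! / (⌊N/2⌋! ⌊N/3⌋! ⌊N/5⌋!))`, which approximates both
Chebyshev functions at `N`. -/
noncomputable def logFactorialRatio (N : ℕ) : ℝ :=
  Real.log N.factorial - Real.log (N / 2).factorial - Real.log (N / 3).factorial -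
    Real.log (N / 5).factorial + Real.log (N / 30).factorial

theorem logFactorialRatio_eq_sum (N : ℕ) :
    logFactorialRatio N = ∑ d ∈ Ioc 0 N, vonMangoldt d *
      ((N / d : ℕ) - (N / d / 2 : ℕ) - (N / d / 3 : ℕ) - (N / d / 5 : ℕ) + (N / d / 30 : ℕ)) := by
  simp only [logFactorialRatio, log_factorial_eq_sum_vonMangoldt (Nat.div_le_self N _),
    log_factorial_eq_sum_vonMangoldt le_rfl, mul_add, mul_sub, sum_add_distrib, sum_sub_distrib,
    Nat.div_right_comm N _]

theorem logFactorialRatio_le_psi (N : ℕ) : logFactorialRatio N ≤ psi N := by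
  rw [logFactorialRatio_eq_sum, psi, Nat.floor_natCast]
  refine sum_le_sum fun d _ ↦ mul_le_of_le_one_right vonMangoldt_nonneg ?_
  have h := Nat.cast_le (α := ℝ).2
    (by omega : N / d + N / d / 30 ≤ 1 + N / d / 2 + N / d / 3 + N / d / 5)
  simp only [Nat.cast_add, Nat.cast_one] at h
  linarith

theorem theta_sub_theta_eq_sum {a b : ℕ} (hab : a ≤ b) :
    theta b - theta a = ∑ p ∈ Ioc a b with p.Prime, Real.log p := by
  simp only [theta, Nat.floor_natCast, sum_filter]
  rw [← sum_Ioc_consecutive _ (Nat.zero_le a) hab, add_sub_cancel_left]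

theorem theta_le_logFactorialRatio_add (N : ℕ) :
    theta N ≤ logFactorialRatio N + theta (N / 6 : ℕ) := by
  rw [← sub_le_iff_le_add, theta_sub_theta_eq_sum (Nat.div_le_self N 6), logFactorialRatio_eq_sum]
  have h_coeff (q : ℕ) : q / 2 + q / 3 + q / 5 ≤ q + q / 30 := by omega
  have h_coeff_of_lt {q : ℕ} (hq : 1 ≤ q) (hq6 : q < 6) :
      1 + q / 2 + q / 3 + q / 5 ≤ q + q / 30 := by omega
  refine (sum_le_sum fun p hp ↦ ?_).trans (sum_le_sum_of_subset_of_nonneg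
    ((filter_subset _ _).trans (Ioc_subset_Ioc_left (Nat.zero_le _))) fun d _ _ ↦ ?_)
  · obtain ⟨hp_mem, hp_prime⟩ := mem_filter.1 hp
    rw [mem_Ioc] at hp_mem
    rw [vonMangoldt_apply_prime hp_prime]
    refine le_mul_of_one_le_right (Real.log_natCast_nonneg p) ?_
    have h := Nat.cast_le (α := ℝ).2 (h_coeff_of_lt (Nat.div_pos hp_mem.2 hp_prime.pos)
      ((Nat.div_lt_iff_lt_mul hp_prime.pos).2 (by omega)))
    simp only [Nat.cast_add, Nat.cast_one] at h
    linarith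
  · refine mul_nonneg vonMangoldt_nonneg ?_
    have h := Nat.cast_le (α := ℝ).2 (h_coeff (N / d))
    simp only [Nat.cast_add] at h
    linarith

/-- The error in the approximation `log k! ≈ k log k - k`. -/
noncomputable def stirlingError (k : ℕ) : ℝ :=
  Real.log k.factorial - (k * Real.log k - k)

theorem stirlingError_nonneg {k : ℕ} (hk : k ≠ 0) : 0 ≤ stirlingError k := by
  have h := Stirling.le_log_factorial_stirling hk
  have h_log : 0 ≤ Real.log k := Real.log_natCast_nonneg k
  have h_two_pi : 0 ≤ Real.log (2 * Real.pi) := Real.log_nonneg (by linarith [Real.pi_gt_three])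
  unfold stirlingError
  linarith

theorem stirlingError_le {k : ℕ} (hk : 1 ≤ k) : stirlingError k ≤ Real.log k + 1 := by
  unfold stirlingError
  induction k, hk using Nat.le_induction with
  | base => simp
  | succ k hk ih =>
    have h_log := Real.one_sub_inv_le_log_of_pos (by positivity : (0 : ℝ) < (k + 1) / k)
    rw [Real.log_div (by positivity) (by positivity), inv_div, one_sub_div (by positivity),
      add_sub_cancel_left, div_le_iff₀ (by positivity)] at h_log
    rw [Nat.factorial_succ, Nat.cast_mul, Real.log_mul (by positivity) (by positivity)]
    push_cast
    linarith

/-- Chebyshev's constant, multiplied by `30`. -/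
noncomputable def chebyshevConst : ℝ :=
  30 * Real.log 30 - 15 * Real.log 15 - 10 * Real.log 10 - 6 * Real.log 6

theorem logFactorialRatio_thirty_mul {s : ℕ} (hs : 0 < s) :
    logFactorialRatio (30 * s) = chebyshevConst * s + stirlingError (30 * s) -
      stirlingError (15 * s) - stirlingError (10 * s) - stirlingError (6 * s) +
      stirlingError s := by
  have hs' : (s : ℝ) ≠ 0 := by positivity
  rw [logFactorialRatio, show 30 * s / 2 = 15 * s by omega, show 30 * s / 3 = 10 * s by omega,
    show 30 * s / 5 = 6 * s by omega, show 30 * s / 30 = s by omega]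
  simp only [stirlingError, chebyshevConst, Nat.cast_mul, Nat.cast_ofNat,
    Real.log_mul (OfNat.ofNat_ne_zero _) hs']
  ring

theorem le_logFactorialRatio_thirty_mul {s : ℕ} (hs : 0 < s) {L : ℝ}
    (hL : Real.log (30 * s : ℕ) ≤ L) :
    chebyshevConst * s - 3 * (L + 1) ≤ logFactorialRatio (30 * s) := by
  rw [logFactorialRatio_thirty_mul hs]
  have h_error {k : ℕ} (hk : 0 < k) (hks : k ≤ 30 * s) : stirlingError k ≤ L + 1 :=
    (stirlingError_le hk).trans (by gcongr; exact (Real.log_le_log (by positivity)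
      (by exact_mod_cast hks)).trans hL)
  have h15 := h_error (k := 15 * s) (by omega) (by omega)
  have h10 := h_error (k := 10 * s) (by omega) (by omega)
  have h6 := h_error (k := 6 * s) (by omega) (by omega)
  have h30 := stirlingError_nonneg (k := 30 * s) (by omega)
  have h1 := stirlingError_nonneg hs.ne'
  linarith

theorem logFactorialRatio_thirty_mul_le {s : ℕ} (hs : 0 < s) {L : ℝ}
    (hL : Real.log (30 * s : ℕ) ≤ L) :
    logFactorialRatio (30 * s) ≤ chebyshevConst * s + 2 * (L + 1) := by
  rw [logFactorialRatio_thirty_mul hs]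
  have h_log : Real.log s ≤ L := (Real.log_le_log (by positivity) (by norm_cast; omega)).trans hL
  have h15 := stirlingError_nonneg (k := 15 * s) (by omega)
  have h10 := stirlingError_nonneg (k := 10 * s) (by omega)
  have h6 := stirlingError_nonneg (k := 6 * s) (by omega)
  have h30 := stirlingError_le (k := 30 * s) (by omega)
  have h1 := stirlingError_le hs
  linarith

theorem mul_log_two_le_chebyshevConst : 39.8 * Real.log 2 ≤ chebyshevConst := by
  have h : Real.log (2 ^ 199 * (15 ^ 15 * 10 ^ 10 * 6 ^ 6) ^ 5) ≤ Real.log ((30 ^ 30) ^ 5) :=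
    Real.log_le_log (by positivity) (by norm_num)
  rw [Real.log_mul (by norm_num) (by norm_num), Real.log_pow, Real.log_pow, Real.log_pow,
    Real.log_pow, Real.log_mul (by norm_num) (by norm_num),
    Real.log_mul (by norm_num) (by norm_num), Real.log_pow, Real.log_pow, Real.log_pow] at h
  unfold chebyshevConst
  push_cast at h
  linarith

theorem log_le_mul_sqrt {x : ℝ} (hx : 2 ^ 20 ≤ x) :
    Real.log x ≤ 20 * Real.log 2 / 1024 * √x := by
  have h_exp : Real.exp 2 ≤ 2 ^ 20 := by
    calc Real.exp 2 = Real.exp 1 ^ 2 := by rw [← Real.exp_nat_mul]; norm_num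
      _ ≤ 3 ^ 2 := by gcongr; exact Real.exp_one_lt_three.le
      _ ≤ 2 ^ 20 := by norm_num
  have h := Real.log_div_sqrt_antitoneOn h_exp (h_exp.trans hx) hx
  have h_sqrt : √((2 : ℝ) ^ 20) = 1024 := by
    rw [show (2 : ℝ) ^ 20 = 1024 ^ 2 by norm_num]
    exact Real.sqrt_sq (by norm_num)
  beta_reduce at h
  rwa [h_sqrt, Real.log_pow, div_le_iff₀ (Real.sqrt_pos.2 (by positivity)),
    Nat.cast_ofNat] at h

theorem theta_succ_le {n : ℕ} : theta (n + 1 : ℕ) ≤ theta n + Real.log (n + 1 : ℕ) := by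
  rw [← sub_le_iff_le_add', theta_sub_theta_eq_sum n.le_succ]
  refine (sum_le_sum_of_subset_of_nonneg (filter_subset _ _) fun p _ _ ↦
    Real.log_natCast_nonneg p).trans_eq ?_
  simp

theorem le_theta_sub_theta {t : ℕ} (ht : 0 < t) :
    (chebyshevConst - 10 * Real.log 2) * t - 8 * Real.log (240 * t : ℕ) - 7 -
        2 * √(240 * t : ℕ) * Real.log (240 * t : ℕ) ≤
      theta (240 * t : ℕ) - theta (180 * t + 1 : ℕ) := by
  set L := Real.log (240 * t : ℕ) with hL
  have h_log {k : ℕ} (hk : 0 < k) (hkt : k ≤ 240 * t) : Real.log k ≤ L :=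
    Real.log_le_log (by positivity) (by exact_mod_cast hkt)
  have h240 := le_logFactorialRatio_thirty_mul (s := 8 * t) (L := L) (by omega)
    (h_log (by omega) (by omega))
  have h180 := logFactorialRatio_thirty_mul_le (s := 6 * t) (L := L) (by omega)
    (h_log (by omega) (by omega))
  have h30 := logFactorialRatio_thirty_mul_le ht (h_log (by omega) (by omega))
  rw [show 30 * (8 * t) = 240 * t by ring] at h240
  rw [show 30 * (6 * t) = 180 * t by ring] at h180
  have h_psi := logFactorialRatio_le_psi (240 * t)
  have h_psi_theta := psi_sub_theta_le (x := (240 * t : ℕ)) (by norm_cast; omega)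
  have h_theta180 := theta_le_logFactorialRatio_add (180 * t)
  have h_theta30 := theta_le_logFactorialRatio_add (30 * t)
  rw [show 180 * t / 6 = 30 * t by omega] at h_theta180
  rw [show 30 * t / 6 = 5 * t by omega] at h_theta30
  have h_theta5 := theta_le_log4_mul_x (x := (5 * t : ℕ)) (by positivity)
  have h_theta181 := theta_succ_le (n := 180 * t)
  have h_log181 := h_log (k := 180 * t + 1) (by omega) (by omega)
  rw [show (4 : ℝ) = 2 ^ 2 by norm_num, Real.log_pow] at h_theta5
  rw [← hL] at h_psi_theta
  push_cast at *
  linarith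

theorem mul_log_two_le_theta_sub_theta {t : ℕ} (ht : 4370 ≤ t) :
    20 * t * Real.log 2 ≤ theta (240 * t : ℕ) - theta (180 * t + 1 : ℕ) := by
  refine le_trans ?_ (le_theta_sub_theta (by omega))
  have ht' : (4370 : ℝ) ≤ t := by exact_mod_cast ht
  have h_log := log_le_mul_sqrt (x := (240 * t : ℕ)) (by push_cast; linarith)
  have h_sq : √(240 * t : ℕ) * √(240 * t : ℕ) = (240 * t : ℕ) :=
    Real.mul_self_sqrt (by positivity)
  have h_sqrt : 1024 ≤ √(240 * t : ℕ) := Real.le_sqrt_of_sq_le (by push_cast; linarith)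
  have h_L_nonneg : 0 ≤ Real.log (240 * t : ℕ) := Real.log_natCast_nonneg _
  generalize √(240 * t : ℕ) = w at *
  generalize Real.log (240 * t : ℕ) = L at *
  have h_wL : w * L ≤ 4.6875 * Real.log 2 * t := by
    calc w * L ≤ w * (20 * Real.log 2 / 1024 * w) := by gcongr
      _ = 20 * Real.log 2 / 1024 * (w * w) := by ring
      _ = 4.6875 * Real.log 2 * t := by
        rw [h_sq]
        push_cast
        ring
  have h_L : 1024 * L ≤ w * L := by gcongr
  have h_const : 39.8 * Real.log 2 * t ≤ chebyshevConst * t := by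
    gcongr
    exact mul_log_two_le_chebyshevConst
  have h_log_two : 0.6931 * t ≤ Real.log 2 * t := by
    gcongr
    linarith [Real.log_two_gt_d9]
  linarith

/-- The product of the primes `p` with `a < p ≤ b`. -/
def primeProd (a b : ℕ) : ℕ :=
  ∏ p ∈ Ioc a b with p.Prime, p

theorem log_primeProd {a b : ℕ} (hab : a ≤ b) : Real.log (primeProd a b) = theta b - theta a := by
  rw [theta_sub_theta_eq_sum hab, primeProd, Nat.cast_prod, Real.log_prod]
  intro p hp
  have := (mem_filter.1 hp).2.pos
  positivity

theorem primeProd_pos (a b : ℕ) : 0 < primeProd a b :=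
  prod_pos fun _ hp ↦ (mem_filter.1 hp).2.pos

theorem primeProd_dvd {a b x : ℕ} (h : ∀ p, p.Prime → a < p → p ≤ b → p ∣ x) :
    primeProd a b ∣ x := by
  refine prod_primes_dvd _ (fun p hp ↦ (mem_filter.1 hp).2.prime) fun p hp ↦ ?_
  obtain ⟨hp_mem, hp_prime⟩ := mem_filter.1 hp
  rw [mem_Ioc] at hp_mem
  exact h p hp_prime hp_mem.1 hp_mem.2

theorem two_pow_le_primeProd {t : ℕ} (ht : 4370 ≤ t) :
    2 ^ (20 * t) ≤ primeProd (180 * t + 1) (240 * t) := by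
  have h_log : Real.log (2 ^ (20 * t)) ≤ Real.log (primeProd (180 * t + 1) (240 * t)) := by
    rw [log_primeProd (by omega), Real.log_pow, Nat.cast_mul]
    exact mul_log_two_le_theta_sub_theta ht
  exact_mod_cast (Real.log_le_log_iff (by positivity)
    (by exact_mod_cast primeProd_pos _ _)).1 h_log

end Chebyshev

section CommonPrimes

theorem prime_dvd_multichoose {p i j x : ℕ} (hp : p.Prime) (hj : j < p) (hpx : p ∣ x)
    (hix : i ≤ x) (hxj : x < i + j) : p ∣ Nat.multichoose i j := by
  have h_fact : p ∣ j.factorial * Nat.multichoose i j := by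
    rw [Nat.multichoose_eq, ← Nat.ascFactorial_eq_factorial_mul_choose',
      Nat.ascFactorial_eq_prod_range]
    refine hpx.trans ?_
    rw [← Nat.add_sub_cancel' hix]
    exact Finset.dvd_prod_of_mem (fun l ↦ i + l) (Finset.mem_range.2 (by omega))
  exact (hp.dvd_mul.1 h_fact).resolve_left fun h ↦ hj.not_ge (hp.dvd_factorial.1 h)

/-- The factor divisible by `p` is the first one when `p ≤ n + k`, and otherwise the second one
contains `2 p` in its numerator. -/
theorem prime_dvd_multichoose_mul_multichoose {p n N k : ℕ} (hp : p.Prime) (hnp : n < p)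
    (hN : N < 2 * p) (hpN : 3 * p ≤ N + 2 * n + 1) (hk : k ≤ n) :
    p ∣ Nat.multichoose (n + 1) k * Nat.multichoose (N + 1) (n - k) := by
  rcases le_or_gt p (n + k) with h | h
  · exact (prime_dvd_multichoose hp (by omega) dvd_rfl (by omega) (by omega)).mul_right _
  · exact (prime_dvd_multichoose hp (by omega) (dvd_mul_left p 2) (by omega) (by omega)).mul_left _

theorem thirty_three_pow_le : 33 ^ 720 ≤ 2 ^ 17 * (272 ^ 180 * 16 ^ 540) := by decide +kernel

theorem thirty_four_pow_le :
    16 ^ 180 * 17 ^ 360 * 34 ^ 720 ≤ 2 ^ 16 * (17 ^ 540 * 33 ^ 720) := by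
  decide +kernel

variable {t e s W Δ N : ℕ}

theorem remainder_lt_seventeen_sixteen (hst : s + 13 ≤ 3 * t) (hW : 4 * W ≤ 2 ^ s)
    (hΔ : 2 ^ (20 * t) ≤ Δ) :
    4 * W * 33 ^ (720 * t + e + 1) < Δ * (272 ^ (180 * t + e + 1) * 16 ^ (540 * t)) := by
  have h_pow := Nat.pow_le_pow_left thirty_three_pow_le t
  simp only [mul_pow, ← pow_mul] at h_pow
  calc 4 * W * 33 ^ (720 * t + e + 1) = 4 * W * 33 ^ (720 * t) * 33 ^ (e + 1) := by ring
    _ ≤ 2 ^ s * (2 ^ (17 * t) * (272 ^ (180 * t) * 16 ^ (540 * t))) * 33 ^ (e + 1) := by gcongr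
    _ < 2 ^ s * (2 ^ (17 * t) * (272 ^ (180 * t) * 16 ^ (540 * t))) * 272 ^ (e + 1) := by
      gcongr
      norm_num
    _ = 2 ^ (s + 17 * t) * (272 ^ (180 * t + e + 1) * 16 ^ (540 * t)) := by ring
    _ ≤ 2 ^ (20 * t) * (272 ^ (180 * t + e + 1) * 16 ^ (540 * t)) := by
      gcongr
      · norm_num
      · omega
    _ ≤ Δ * (272 ^ (180 * t + e + 1) * 16 ^ (540 * t)) := by gcongr

theorem denominator_le_seventeen_sixteen (hst : s + 13 ≤ 3 * t) (he : e ≤ 1)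
    (hN : N + 1 + e = 360 * t) (hW : 4 * W ≤ 2 ^ s) (hΔ : 2 ^ (20 * t) ≤ Δ) :
    4 * W * 16 ^ (180 * t + e) * 17 ^ (2 * (180 * t + e)) * 34 ^ (2 * (N + 1)) ≤
      15 * Δ ^ 2 * 17 ^ (540 * t) * 33 ^ (2 * (N + 1)) := by
  have h_pow := Nat.pow_le_pow_left thirty_four_pow_le t
  simp only [mul_pow, ← pow_mul] at h_pow
  have h_exp : 720 * t = 2 * (N + 1) + 2 * e := by omega
  refine le_of_mul_le_mul_right ?_ (by positivity : 0 < 33 ^ (2 * e))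
  calc _ = 4 * W * (16 ^ (180 * t) * 17 ^ (360 * t) * (34 ^ (2 * (N + 1)) * 33 ^ (2 * e))) *
        (16 ^ e * 17 ^ (2 * e)) := by ring
    _ ≤ 4 * W * (16 ^ (180 * t) * 17 ^ (360 * t) * (34 ^ (2 * (N + 1)) * 34 ^ (2 * e))) *
        2 ^ 13 := by
      gcongr
      · norm_num
      · interval_cases e <;> norm_num
    _ = 4 * W * (16 ^ (180 * t) * 17 ^ (360 * t) * 34 ^ (720 * t)) * 2 ^ 13 := by
      rw [h_exp]
      ring
    _ ≤ 2 ^ s * (2 ^ (16 * t) * (17 ^ (540 * t) * 33 ^ (720 * t))) * 2 ^ 13 := by gcongr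
    _ = 2 ^ (s + 13 + 16 * t) * (17 ^ (540 * t) * 33 ^ (720 * t)) := by ring
    _ ≤ 2 ^ (2 * (20 * t)) * (17 ^ (540 * t) * 33 ^ (720 * t)) := by
      gcongr
      · norm_num
      · omega
    _ = 1 * (2 ^ (20 * t)) ^ 2 * (17 ^ (540 * t) * 33 ^ (720 * t)) := by ring
    _ ≤ 15 * Δ ^ 2 * (17 ^ (540 * t) * 33 ^ (720 * t)) := by
      gcongr
      norm_num
    _ = _ := by
      rw [h_exp]
      ring

theorem padeAdmissible_seventeen_sixteen (ht : 4370 ≤ t) (hst : s + 13 ≤ 3 * t) (he : e ≤ 1)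
    (hN : N + 1 + e = 360 * t) (hW : 4 * W ≤ 2 ^ s) :
    PadeAdmissible 17 16 (2 * W) W (primeProd (180 * t + 1) (240 * t)) (180 * t + e) N where
  dvd k hk := primeProd_dvd fun p hp h_gt h_le ↦
    prime_dvd_multichoose_mul_multichoose hp (by omega) (by omega) (by omega) hk
  remainder_lt := by
    have h := remainder_lt_seventeen_sixteen (e := e) hst hW (two_pow_le_primeProd ht)
    rw [show 2 * (180 * t + e) + N + 2 = 720 * t + e + 1 by omega,
      show 180 * t + e + N + 1 = 540 * t by omega]
    simpa only [Nat.reduceSub, one_pow, mul_one, Nat.reduceAdd, Nat.reduceMul, ← mul_assoc]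
      using h
  denominator_le := by
    rw [show 180 * t + e + N + 1 = 540 * t by omega]
    exact denominator_le_seventeen_sixteen hst he hN hW (two_pow_le_primeProd ht)

end CommonPrimes

section PowersOfSeventeen

variable {m y : ℕ}

theorem le_two_mul_of_sq_le {P Q : ℤ} (hP : 0 ≤ P) (h : 15 * (P - Q) ^ 2 ≤ P) : Q ≤ 2 * P := by
  nlinarith

theorem four_mul_seventeen_pow_le : 4 * 17 ^ 540 ≤ 2 ^ 2300 := by decide +kernel

theorem seventeen_pow_lt_sq_of_2359800_le (hm : 2359800 ≤ m) :
    (17 : ℤ) ^ m < 15 * ((17 : ℤ) ^ m - 2 ^ y) ^ 2 := by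
  by_contra! hE
  have h_le := four_mul_le_of_sq_le (by omega) hE
  obtain ⟨t, r, hr, rfl⟩ : ∃ t r, r < 540 ∧ 540 * t + r = m :=
    ⟨m / 540, m % 540, m.mod_lt (by norm_num), m.div_add_mod 540⟩
  obtain ⟨j, rfl⟩ := Nat.exists_eq_add_of_le (show 4 * (540 * t) ≤ y by omega)
  have h_seventeen : 17 ^ (540 * t + r) = 17 ^ r * 17 ^ (540 * t) := by rw [pow_add, mul_comm]
  have h_two : 2 ^ (4 * (540 * t) + j) = 2 ^ j * 16 ^ (540 * t) := by
    rw [pow_add, pow_mul, mul_comm]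
    norm_num
  have hW : 4 * 17 ^ r ≤ 2 ^ 2300 :=
    (by gcongr; omega : 4 * 17 ^ r ≤ 4 * 17 ^ 540).trans four_mul_seventeen_pow_le
  obtain ⟨N, hN⟩ : ∃ N, N + 2 = 360 * t := ⟨360 * t - 2, by omega⟩
  have h_index : 180 * t + N + 2 = 540 * t := by omega
  have h_first := padeAdmissible_seventeen_sixteen (t := t) (e := 0) (N := N + 1) (by omega)
    (by omega) (by omega) hN hW
  have h_second := padeAdmissible_seventeen_sixteen (t := t) (e := 1) (N := N) (by omega)
    (by omega) (by omega) hN hW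
  refine h_first.false_of_succ (Y := 17 ^ r) (X := 2 ^ j) h_second (by norm_num) (by norm_num)
    (by positivity) ?_ ?_ <;> rw [add_zero, h_index]
  · rw [← h_two, mul_assoc, ← h_seventeen]
    exact_mod_cast le_two_mul_of_sq_le (by positivity) hE
  · have h_cast := hE
    rw [show (17 : ℤ) ^ (540 * t + r) = 17 ^ r * 17 ^ (540 * t) by exact_mod_cast h_seventeen,
      show (2 : ℤ) ^ (4 * (540 * t) + j) = 2 ^ j * 16 ^ (540 * t) by exact_mod_cast h_two] at h_cast
    exact_mod_cast h_cast

theorem seventeen_pow_lt_sq (hm : 2 ≤ m) : (17 : ℤ) ^ m < 15 * ((17 : ℤ) ^ m - 2 ^ y) ^ 2 := by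
  rcases lt_or_ge m 2379319 with h | h
  · exact seventeen_pow_lt_sq_of_lt_2379319 hm h
  · exact seventeen_pow_lt_sq_of_2359800_le (by omega)

end PowersOfSeventeen

section LongExponents

variable {A B X Y m : ℕ}

/-- Here `n` is about `2 m / 5`, and `179 / 180` is the worst ratio `B / A` to be handled. -/
theorem exists_exponents_of_sixty_le (hm : 60 ≤ m) : ∃ n l, 2 * n + l + 3 = m ∧
    2 ^ m * 359 ^ (8 * (3 * n + l + 4)) < 2 ^ 24 * (16 ^ n * 179 ^ (3 * n + l + 4)) ^ 8 ∧
    2 * 16 ^ (n + 1) * 360 ^ (2 * (n + l + 2)) ≤ 15 * 2048 ^ l * 359 ^ (2 * (n + l + 2)) := by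
  refine forall_ge_of_add_period (P := fun m ↦ ∃ n l, 2 * n + l + 3 = m ∧
    2 ^ m * 359 ^ (8 * (3 * n + l + 4)) < 2 ^ 24 * (16 ^ n * 179 ^ (3 * n + l + 4)) ^ 8 ∧
    2 * 16 ^ (n + 1) * 360 ^ (2 * (n + l + 2)) ≤ 15 * 2048 ^ l * 359 ^ (2 * (n + l + 2)))
    (a := 5) (by norm_num) (fun i hi ↦ ?_) ?_ hm
  · have h_base : ∀ i < 5, ∃ n < 30, ∃ l < 20, 2 * n + l + 3 = 60 + i ∧
        2 ^ (60 + i) * 359 ^ (8 * (3 * n + l + 4)) <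
          2 ^ 24 * (16 ^ n * 179 ^ (3 * n + l + 4)) ^ 8 ∧
        2 * 16 ^ (n + 1) * 360 ^ (2 * (n + l + 2)) ≤
          15 * 2048 ^ l * 359 ^ (2 * (n + l + 2)) := by
      decide +kernel
    obtain ⟨n, -, l, -, h⟩ := h_base i hi
    exact ⟨n, l, h⟩
  · rintro _ ⟨n, l, rfl, h_remainder, h_denominator⟩
    refine ⟨n + 2, l + 1, by ring, ?_, ?_⟩
    · calc _ = 2 ^ (2 * n + l + 3) * 359 ^ (8 * (3 * n + l + 4)) * (2 ^ 5 * 359 ^ 56) := by ring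
        _ < 2 ^ 24 * (16 ^ n * 179 ^ (3 * n + l + 4)) ^ 8 * (16 ^ 16 * 179 ^ 56) :=
          Nat.mul_lt_mul_of_lt_of_le h_remainder (by norm_num) (by norm_num)
        _ = _ := by ring
    · calc _ = 2 * 16 ^ (n + 1) * 360 ^ (2 * (n + l + 2)) * (16 ^ 2 * 360 ^ 6) := by ring
        _ ≤ 15 * 2048 ^ l * 359 ^ (2 * (n + l + 2)) * (2048 * 359 ^ 6) :=
          Nat.mul_le_mul h_denominator (by norm_num)
        _ = _ := by ring

theorem mul_sub_lt_of_sq_lt (hA : 2048 ≤ A) (hd : 16 * (A - B) ^ 2 < A) : 180 * (A - B) < A := by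
  refine lt_of_pow_lt_pow_left₀ 2 (Nat.zero_le A) ?_
  nlinarith

theorem remainder_lt_of_pow_lt {n s : ℕ} (hBA : B < A) (hd : 16 * (A - B) ^ 2 < A)
    (hd_lin : 180 * (A - B) < A) (hAm : 2 ^ 16 * A ^ 4 ≤ 2 ^ m)
    (h : 2 ^ m * 359 ^ (8 * s) < 2 ^ 24 * (16 ^ n * 179 ^ s) ^ 8) :
    2 * A * (A - B) ^ (2 * n + 1) * (A + B) ^ s < A ^ (n + 1) * B ^ s := by
  have hB : 0 < B := by omega
  have h_sum : (A + B) ^ s * 179 ^ s ≤ 359 ^ s * B ^ s := by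
    rw [← mul_pow, ← mul_pow]
    gcongr 1
    omega
  have h_gap : 2 * (A - B) * 359 ^ s < 16 ^ n * 179 ^ s := by
    refine lt_of_pow_lt_pow_left₀ 8 (Nat.zero_le _) (lt_of_mul_lt_mul_left ?_ (2 ^ 24).zero_le)
    calc _ = 2 ^ 16 * (16 * (A - B) ^ 2) ^ 4 * 359 ^ (8 * s) := by ring
      _ ≤ 2 ^ 16 * A ^ 4 * 359 ^ (8 * s) := by gcongr
      _ ≤ 2 ^ m * 359 ^ (8 * s) := by gcongr
      _ < _ := h
  generalize A - B = d at *
  refine lt_of_mul_lt_mul_right ?_ (16 ^ n * 179 ^ s).zero_le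
  calc _ = 2 * A * d * (16 * d ^ 2) ^ n * ((A + B) ^ s * 179 ^ s) := by ring
    _ ≤ 2 * A * d * A ^ n * (359 ^ s * B ^ s) := by gcongr
    _ = 2 * d * 359 ^ s * (A ^ (n + 1) * B ^ s) := by ring
    _ < 16 ^ n * 179 ^ s * (A ^ (n + 1) * B ^ s) := by
      have hA : 0 < A := hB.trans hBA
      gcongr
    _ = _ := by ring

theorem denominator_le_of_le {n l : ℕ} (hA : 2048 ≤ A) (hd_lin : 180 * (A - B) < A)
    (h : 2 * 16 ^ (n + 1) * 360 ^ (2 * (n + l + 2)) ≤ 15 * 2048 ^ l * 359 ^ (2 * (n + l + 2))) :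
    2 * A * 16 ^ (n + 1) * A ^ (2 * (n + 1)) * (2 * A) ^ (2 * (n + l + 2)) ≤
      15 * A ^ (2 * n + l + 3) * (A + B) ^ (2 * (n + l + 2)) := by
  generalize 2 * (n + l + 2) = j at *
  have h_sum : (2 * A) ^ j * 359 ^ j ≤ 360 ^ j * (A + B) ^ j := by
    rw [← mul_pow, ← mul_pow]
    gcongr 1
    omega
  refine le_of_mul_le_mul_right ?_ (by positivity : 0 < 359 ^ j * 2048 ^ l)
  calc _ = 2 * 16 ^ (n + 1) * A ^ (2 * n + 3) * 2048 ^ l * ((2 * A) ^ j * 359 ^ j) := by ring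
    _ ≤ 2 * 16 ^ (n + 1) * A ^ (2 * n + 3) * A ^ l * (360 ^ j * (A + B) ^ j) := by gcongr
    _ = 2 * 16 ^ (n + 1) * 360 ^ j * (A ^ (2 * n + l + 3) * (A + B) ^ j) := by ring
    _ ≤ 15 * 2048 ^ l * 359 ^ j * (A ^ (2 * n + l + 3) * (A + B) ^ j) := by gcongr
    _ = _ := by ring

theorem mul_pow_lt_sq_of_two_mul_le (hA : 2048 ≤ A) (hBA : B < A) (hd : 16 * (A - B) ^ 2 < A)
    (hAm : 2 ^ 16 * A ^ 4 ≤ 2 ^ m) (hY : 2 * Y ≤ A) (hX : 0 < X) :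
    (Y * A ^ m : ℤ) < 15 * (Y * (A : ℤ) ^ m - X * (B : ℤ) ^ m) ^ 2 := by
  by_contra! hE
  have hm : 60 ≤ m := by
    refine (Nat.pow_le_pow_iff_right one_lt_two).1 (le_trans ?_ hAm)
    exact (by norm_num : 2 ^ 60 ≤ 2 ^ 16 * 2048 ^ 4).trans (by gcongr)
  have hd_lin := mul_sub_lt_of_sq_lt hA hd
  obtain ⟨n, l, rfl, h_remainder, h_denominator⟩ := exists_exponents_of_sixty_le hm
  have h_good : PadeGood A (2 * A) A A B n (n + l + 1) := by
    constructor
    · calc _ = 2 * A * (A - B) ^ (2 * n + 1) * (A + B) ^ (3 * n + l + 4) := by ring_nf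
        _ < A ^ (n + 1) * B ^ (3 * n + l + 4) :=
          remainder_lt_of_pow_lt hBA hd hd_lin hAm h_remainder
        _ = _ := by ring
    · convert denominator_le_of_le hA hd_lin h_denominator using 3
      ring
  have hXB : X * B ^ (2 * n + l + 3) ≤ A * A ^ (2 * n + l + 3) := by
    have h_double := le_two_mul_of_sq_le (by positivity) hE
    refine le_trans (?_ : _ ≤ 2 * Y * A ^ (2 * n + l + 3)) (by gcongr)
    zify
    linarith
  rw [show 2 * n + l + 3 = n + (n + l + 1) + 2 by ring] at hXB hE
  refine h_good.false_of_sq_le (by omega) (by omega) hBA ?_ hX hXB ?_ hE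
  · refine le_of_mul_le_mul_left ?_ (by norm_num : 0 < 16)
    calc 16 * ((A - B) ^ 2 * (A + B)) = 16 * (A - B) ^ 2 * (A + B) := by ring
      _ ≤ A * (16 * B) := Nat.mul_le_mul hd.le (by omega)
      _ = _ := by ring
  · exact Nat.mul_le_mul_right _ (by omega)

theorem padeLadder_2197_2187 : PadeLadder 338 676 2197 2197 2187 46 10 := by decide +kernel

theorem mul_pow_2197_lt_sq (hm : 46 ≤ m) (hY : Y ≤ 169) (hX : 0 < X) :
    (Y * 2197 ^ m : ℤ) < 15 * (Y * 2197 ^ m - X * 2187 ^ m) ^ 2 := by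
  by_contra! hE
  obtain ⟨n, N, rfl, h_good⟩ := padeLadder_2197_2187.exists_padeGood (by norm_num) (by norm_num) hm
  have h_double := le_two_mul_of_sq_le (by positivity) hE
  refine h_good.false_of_sq_le (W := Y) (by norm_num) (by norm_num) (by norm_num) (by norm_num) hX
    ?_ ?_ hE
  · refine le_trans (?_ : _ ≤ 2 * Y * 2197 ^ (n + N + 2)) (by gcongr; omega)
    zify
    linarith
  · gcongr
    omega

end LongExponents

section PerfectPowerGaps

variable {A B c b u v : ℕ}

/-- The gap between `A` and `B` is so small that `Aᶻ` and `Bᶻ` can differ by a factor `1.9` only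
for `z > u (4 log₂ A + 20)`, which is long enough for the Padé approximants of `B / A`. -/
def SmallGap (A B u : ℕ) : Prop :=
  2048 ≤ A ∧ 25 * (A - B) * u * (4 * Nat.log2 A + 20) ≤ 16 * B

instance (A B u : ℕ) : Decidable (SmallGap A B u) := inferInstanceAs (Decidable (_ ∧ _))

theorem sq_mul_le_two_pow {L : ℕ} (hL : 20 ≤ L) : (L * (4 * L + 20)) ^ 2 ≤ 6 * 2 ^ L := by
  induction L, hL using Nat.le_induction with
  | base => norm_num
  | succ L hL ih =>
    have h_double : ((L + 1) * (4 * (L + 1) + 20)) ^ 2 ≤ 2 * (L * (4 * L + 20)) ^ 2 := by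
      have h_linear : 5 * ((L + 1) * (4 * (L + 1) + 20)) ≤ 7 * (L * (4 * L + 20)) := by nlinarith
      nlinarith [Nat.pow_le_pow_left h_linear 2]
    rw [pow_succ 2 L]
    linarith

theorem smallGap_of_two_pow_le (hA : 2 ^ 20 ≤ A) (hu : 2 ^ u ≤ A) (hBA : B < A)
    (hd : 16 * (A - B) ^ 2 < A) : SmallGap A B u := by
  have hA_zero : A ≠ 0 := by omega
  have hL : 20 ≤ Nat.log2 A := (Nat.le_log2 hA_zero).2 hA
  have huL : u ≤ Nat.log2 A := (Nat.le_log2 hA_zero).2 hu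
  have h_sq : (u * (4 * Nat.log2 A + 20)) ^ 2 ≤ 6 * A := by
    calc _ ≤ (Nat.log2 A * (4 * Nat.log2 A + 20)) ^ 2 := by gcongr
      _ ≤ 6 * 2 ^ Nat.log2 A := sq_mul_le_two_pow hL
      _ ≤ _ := by gcongr; exact Nat.log2_self_le hA_zero
  have hd_lin := mul_sub_lt_of_sq_lt (by omega) hd
  refine ⟨by omega, ?_⟩
  rw [mul_assoc _ u]
  generalize u * (4 * Nat.log2 A + 20) = M at *
  refine (Nat.pow_le_pow_iff_left two_ne_zero).1 ?_
  have h_prod : 16 * (A - B) ^ 2 * M ^ 2 ≤ A * (6 * A) := Nat.mul_le_mul hd.le h_sq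
  have hAB : (179 * A) ^ 2 ≤ (180 * B) ^ 2 := Nat.pow_le_pow_left (by omega) 2
  nlinarith

/-- All `(c, u)` with `2 ≤ c`, `3 ≤ u` and `c ^ u < 2 ^ 20`. -/
def higherPowers : List (ℕ × ℕ) :=
  (List.range 102 ×ˢ List.range 20).filter fun p ↦ 2 ≤ p.1 ∧ 3 ≤ p.2 ∧ p.1 ^ p.2 < 2 ^ 20

theorem mem_higherPowers (hc : 2 ≤ c) (hu : 3 ≤ u) (h : c ^ u < 2 ^ 20) :
    (c, u) ∈ higherPowers := by
  have hc_lt : c < 102 := by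
    refine lt_of_pow_lt_pow_left₀ 3 (by norm_num) ?_
    calc c ^ 3 ≤ c ^ u := Nat.pow_le_pow_right (by omega) hu
      _ < 2 ^ 20 := h
      _ < 102 ^ 3 := by norm_num
  have hu_lt : u < 20 :=
    (Nat.pow_lt_pow_iff_right one_lt_two).1 ((Nat.pow_le_pow_left hc u).trans_lt h)
  simp only [higherPowers, List.mem_filter, decide_eq_true_eq]
  exact ⟨List.mem_product.2 ⟨List.mem_range.2 hc_lt, List.mem_range.2 hu_lt⟩, hc, hu, h⟩

/-- A kernel-checkable form of the implication from a small difference to `SmallGap`, with the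
pair `13 ^ 3 = 3 ^ 7 + 10` as its only exception. -/
def SmallGapOfClose (p q : ℕ × ℕ) : Prop :=
  q.1 ^ q.2 < p.1 ^ p.2 → 16 * (p.1 ^ p.2 - q.1 ^ q.2) ^ 2 < p.1 ^ p.2 →
    p = (13, 3) ∧ q = (3, 7) ∨ SmallGap (p.1 ^ p.2) (q.1 ^ q.2) p.2

instance (p q : ℕ × ℕ) : Decidable (SmallGapOfClose p q) :=
  inferInstanceAs (Decidable (_ → _ → _))

theorem smallGapOfClose_higherPowers :
    ∀ p ∈ higherPowers, ∀ q ∈ higherPowers, SmallGapOfClose p q := by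
  decide +kernel

theorem smallGapOfClose_squares : ∀ p ∈ higherPowers,
    SmallGapOfClose p (Nat.sqrt (p.1 ^ p.2), 2) ∧
      SmallGapOfClose (Nat.sqrt (p.1 ^ p.2) + 1, 2) p := by
  decide +kernel

theorem eq_sqrt_of_close (h_lt : b ^ 2 < A) (hd : 16 * (A - b ^ 2) ^ 2 < A) :
    b = Nat.sqrt A := by
  refine Nat.eq_sqrt'.2 ⟨h_lt.le, ?_⟩
  by_contra! h_le
  obtain ⟨d, rfl⟩ := Nat.exists_eq_add_of_le h_lt.le
  rw [Nat.add_sub_cancel_left] at hd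
  have h_gap : 2 * b + 1 ≤ d := by linarith
  nlinarith

theorem eq_sqrt_add_one_of_close (h_lt : B < c ^ 2) (hd : 16 * (c ^ 2 - B) ^ 2 < c ^ 2) :
    c = Nat.sqrt B + 1 := by
  obtain ⟨s, rfl⟩ : ∃ s, c = s + 1 := Nat.exists_eq_add_one_of_ne_zero (by rintro rfl; simp at h_lt)
  rw [Nat.add_left_inj]
  refine Nat.eq_sqrt'.2 ⟨?_, h_lt⟩
  by_contra! h_le
  have h_gap : s + 1 ≤ (s + 1) ^ 2 - B := Nat.le_sub_of_add_le (by nlinarith)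
  nlinarith

theorem smallGapOfClose (hc : 2 ≤ c) (hb : 2 ≤ b) (hu : 2 ≤ u) (hv : 2 ≤ v)
    (h : c ^ u < 2 ^ 20) : SmallGapOfClose (c, u) (b, v) := by
  intro (hBA : b ^ v < c ^ u) (hd : 16 * (c ^ u - b ^ v) ^ 2 < c ^ u)
  have h' : b ^ v < 2 ^ 20 := hBA.trans h
  rcases hu.eq_or_lt with rfl | hu <;> rcases hv.eq_or_lt with rfl | hv
  · have h_sq := pow_le_sq_pow_sub_pow (lt_of_pow_lt_pow_left₀ 2 (Nat.zero_le c) hBA) le_rfl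
    zify [hBA.le] at hd
    linarith [sq_nonneg ((c : ℤ) ^ 2 - (b : ℤ) ^ 2)]
  · have h_check := (smallGapOfClose_squares _ (mem_higherPowers hb hv h')).2
    rw [← eq_sqrt_add_one_of_close hBA hd] at h_check
    exact h_check hBA hd
  · have h_check := (smallGapOfClose_squares _ (mem_higherPowers hc hu h)).1
    rw [← eq_sqrt_of_close hBA hd] at h_check
    exact h_check hBA hd
  · exact smallGapOfClose_higherPowers _ (mem_higherPowers hc hu h) _ (mem_higherPowers hb hv h')
      hBA hd

theorem smallGap_or_exceptional (hc : 2 ≤ c) (hb : 2 ≤ b) (hu : 2 ≤ u) (hv : 2 ≤ v)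
    (hBA : b ^ v < c ^ u) (hd : 16 * (c ^ u - b ^ v) ^ 2 < c ^ u) :
    (c, u) = (13, 3) ∧ (b, v) = (3, 7) ∨ SmallGap (c ^ u) (b ^ v) u := by
  rcases lt_or_ge (c ^ u) (2 ^ 20) with h | h
  · exact smallGapOfClose hc hb hu hv h hBA hd
  · exact Or.inr (smallGap_of_two_pow_le h (Nat.pow_le_pow_left hc u) hBA hd)

end PerfectPowerGaps

section PowerComparison

theorem two_mul_pow_le_pow {a i j : ℕ} (ha : 2 ≤ a) (h : i < j) : 2 * a ^ i ≤ a ^ j :=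
  calc 2 * a ^ i ≤ a * a ^ i := Nat.mul_le_mul_right _ ha
    _ = a ^ (i + 1) := (pow_succ' a i).symm
    _ ≤ a ^ j := Nat.pow_le_pow_right (by omega) h

theorem nineteen_mul_pow_le {P Q : ℝ} {u : ℕ} (hu : 0 < u) (hQ : 0 ≤ Q)
    (h : 20 * u * (Q - P) ≤ Q) : 19 * Q ^ u ≤ 20 * P ^ u := by
  have hu' : (1 : ℝ) ≤ u := by exact_mod_cast hu
  have h_inv : 1 / (20 * (u : ℝ)) ≤ 1 := by
    rw [div_le_one (by positivity)]
    linarith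
  have h_scaled : (1 + -(1 / (20 * (u : ℝ)))) * Q ≤ P := by
    have h_div : Q - P ≤ Q / (20 * u) := by
      rw [le_div_iff₀ (by positivity)]
      linarith
    linarith [show (1 + -(1 / (20 * (u : ℝ)))) * Q = Q - Q / (20 * u) by ring]
  have h_bernoulli : 19 / 20 ≤ (1 + -(1 / (20 * (u : ℝ)))) ^ u := by
    calc (19 : ℝ) / 20 = 1 + u * -(1 / (20 * (u : ℝ))) := by
          field_simp
          norm_num
      _ ≤ _ := one_add_mul_le_pow (by linarith) u
  have h_pow : (1 + -(1 / (20 * (u : ℝ)))) ^ u * Q ^ u ≤ P ^ u := by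
    rw [← mul_pow]
    exact pow_le_pow_left₀ (mul_nonneg (by linarith) hQ) h_scaled u
  linarith [mul_le_mul_of_nonneg_right h_bernoulli (pow_nonneg hQ u)]

theorem exp_sixteen_div_twenty_five_lt : Real.exp (16 / 25) < 19 / 10 := by
  refine lt_of_pow_lt_pow_left₀ 25 (by norm_num) ?_
  calc Real.exp (16 / 25) ^ 25 = Real.exp 1 ^ 16 := by
        rw [← Real.exp_nat_mul, ← Real.exp_nat_mul]
        norm_num
    _ ≤ 2.7182818286 ^ 16 := pow_le_pow_left₀ (Real.exp_pos _).le Real.exp_one_lt_d9.le 16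
    _ < (19 / 10) ^ 25 := by norm_num

theorem ten_mul_pow_lt {A B : ℝ} {z : ℕ} (hA : 0 ≤ A) (hB : 0 < B)
    (h : 25 * z * (A - B) ≤ 16 * B) : 10 * A ^ z < 19 * B ^ z := by
  have h_exp : A ^ z ≤ B ^ z * Real.exp (16 / 25) := by
    calc A ^ z ≤ (B * Real.exp ((A - B) / B)) ^ z := by
          gcongr
          calc A = B * ((A - B) / B + 1) := by field_simp; ring
            _ ≤ _ := by gcongr; exact Real.add_one_le_exp _
      _ = B ^ z * Real.exp (z * ((A - B) / B)) := by rw [mul_pow, Real.exp_nat_mul]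
      _ ≤ _ := by
        gcongr
        rw [← mul_div_assoc, div_le_iff₀ hB]
        linarith
  have h_lt := mul_lt_mul_of_pos_left exp_sixteen_div_twenty_five_lt (pow_pos hB z)
  linarith

theorem twenty_seven_mul_sq_le_two_pow {u : ℕ} (hu : 12 ≤ u) : 27 * u ^ 2 ≤ 2 * 2 ^ u := by
  induction u, hu using Nat.le_induction with
  | base => norm_num
  | succ u hu ih =>
    rw [pow_succ 2 u]
    nlinarith

theorem twenty_seven_mul_sq_le {A u : ℕ} (hA : 2048 ≤ A) (hu : 2 ^ u ≤ A) :
    27 * u ^ 2 ≤ 2 * A := by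
  rcases le_or_gt u 12 with h | h
  · nlinarith
  · exact (twenty_seven_mul_sq_le_two_pow h.le).trans (Nat.mul_le_mul_left 2 hu)

theorem twenty_mul_abs_sub_le {P Q : ℤ} {u : ℕ} (hP : 27 * (u : ℤ) ^ 2 ≤ P)
    (hE : 15 * (P - Q) ^ 2 ≤ P) : 20 * u * |P - Q| ≤ P := by
  have hP_nonneg : 0 ≤ P := (by positivity : (0 : ℤ) ≤ 27 * (u : ℤ) ^ 2).trans hP
  refine le_of_sq_le_sq ?_ hP_nonneg
  calc (20 * u * |P - Q|) ^ 2 = 400 * u ^ 2 * (P - Q) ^ 2 := by rw [mul_pow, sq_abs]; ring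
    _ ≤ 27 * u ^ 2 * (15 * (P - Q) ^ 2) := by nlinarith [sq_nonneg (u * (P - Q))]
    _ ≤ P * P := by gcongr
    _ = P ^ 2 := (sq P).symm

theorem pow_close_of_sq_le {P Q u : ℕ} (hu : 0 < u) (hP : 27 * u ^ 2 ≤ P)
    (hE : 15 * ((P : ℤ) - Q) ^ 2 ≤ P) : 19 * P ^ u ≤ 20 * Q ^ u ∧ 19 * Q ^ u ≤ 20 * P ^ u := by
  have h_abs : 20 * (u : ℝ) * |(P : ℝ) - Q| ≤ P := by
    exact_mod_cast twenty_mul_abs_sub_le (by exact_mod_cast hP) hE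
  have hP_nonneg : (0 : ℝ) ≤ P := P.cast_nonneg
  have hQ_nonneg : (0 : ℝ) ≤ Q := Q.cast_nonneg
  have h_sub : 20 * (u : ℝ) * (P - Q) ≤ P :=
    (mul_le_mul_of_nonneg_left (le_abs_self _) (by positivity)).trans h_abs
  have h_sub' : 20 * (u : ℝ) * (Q - P) ≤ Q := by
    rcases le_total P Q with h | h
    · rw [abs_sub_comm] at h_abs
      exact (mul_le_mul_of_nonneg_left (le_abs_self _) (by positivity)).trans
        (h_abs.trans (by exact_mod_cast h))
    · refine (mul_nonpos_of_nonneg_of_nonpos (by positivity) ?_).trans hQ_nonneg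
      exact sub_nonpos.2 (by exact_mod_cast h)
  exact ⟨by exact_mod_cast nineteen_mul_pow_le hu hP_nonneg h_sub,
    by exact_mod_cast nineteen_mul_pow_le hu hQ_nonneg h_sub'⟩

end PowerComparison

section BothExponents

variable {c b u v z y : ℕ}

theorem mul_ne_mul_of_sq_le (hu : 0 < u) (hBA : b ^ v < c ^ u) (huz : u < z)
    (hE : 15 * ((c : ℤ) ^ z - (b : ℤ) ^ y) ^ 2 ≤ (c : ℤ) ^ z) : v * z ≠ u * y := by
  intro h
  obtain ⟨u', v', h_coprime, hu', hv'⟩ := Nat.exists_coprime u v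
  have hg : 0 < Nat.gcd u v := Nat.gcd_pos_of_pos_left _ hu
  generalize Nat.gcd u v = g at *
  subst hu' hv'
  have hu'_pos : 0 < u' := Nat.pos_of_mul_pos_right hu
  have h_reduced : v' * z = u' * y := Nat.eq_of_mul_eq_mul_left hg (by linarith)
  obtain ⟨k, rfl⟩ : u' ∣ z := h_coprime.dvd_of_dvd_mul_left ⟨y, h_reduced⟩
  obtain rfl : y = v' * k := Nat.eq_of_mul_eq_mul_left hu'_pos (by linarith)
  have hgk : g < k := lt_of_mul_lt_mul_left (by linarith) u'.zero_le
  have h_lt : b ^ v' < c ^ u' := by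
    refine lt_of_pow_lt_pow_left₀ g (Nat.zero_le _) ?_
    rwa [← pow_mul, ← pow_mul]
  have h_gap := pow_le_sq_pow_sub_pow h_lt (show 2 ≤ k by omega)
  push_cast at h_gap
  rw [← pow_mul, ← pow_mul] at h_gap
  have hc_pos : (0 : ℤ) < (c : ℤ) ^ (u' * k) := by
    rw [pow_mul]
    exact pow_pos (by exact_mod_cast (Nat.zero_le _).trans_lt h_lt) k
  linarith

theorem mul_lt_mul_of_sq_le (hb : 2 ≤ b) (hu : 0 < u) (hBA : b ^ v < c ^ u) (huz : u < z)
    (hP : 27 * u ^ 2 ≤ c ^ z) (hE : 15 * ((c : ℤ) ^ z - (b : ℤ) ^ y) ^ 2 ≤ (c : ℤ) ^ z) :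
    v * z < u * y := by
  refine (mul_ne_mul_of_sq_le hu hBA huz hE).lt_of_le ?_
  by_contra! h
  have h_close := (pow_close_of_sq_le hu hP (by exact_mod_cast hE)).1
  have h_double : 2 * (b ^ y) ^ u ≤ (b ^ v) ^ z := by
    rw [← pow_mul, ← pow_mul, mul_comm y]
    exact two_mul_pow_le_pow hb h
  have h_lt : (b ^ v) ^ z < (c ^ z) ^ u := by
    rw [pow_right_comm c]
    exact Nat.pow_lt_pow_left hBA (by omega)
  omega

theorem sixteen_mul_lt (hb : 2 ≤ b) (hu : 0 < u) (hBA : b ^ v < c ^ u)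
    (hP : 27 * u ^ 2 ≤ c ^ z) (hE : 15 * ((c : ℤ) ^ z - (b : ℤ) ^ y) ^ 2 ≤ (c : ℤ) ^ z)
    (h : v * z < u * y) : 16 * b ^ v < 25 * z * (c ^ u - b ^ v) := by
  by_contra! h_le
  zify [hBA.le] at h_le
  have h_exp : 10 * (c ^ u) ^ z < 19 * (b ^ v) ^ z := by
    exact_mod_cast ten_mul_pow_lt (A := (c : ℝ) ^ u) (B := (b : ℝ) ^ v) (z := z) (by positivity)
      (by positivity) (by exact_mod_cast h_le)
  have h_close := (pow_close_of_sq_le hu hP (by exact_mod_cast hE)).2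
  have h_double : 2 * (b ^ v) ^ z ≤ (b ^ y) ^ u := by
    rw [← pow_mul, ← pow_mul, mul_comm y]
    exact two_mul_pow_le_pow hb h
  rw [pow_right_comm c] at h_exp
  omega

/-- Division of `z` by `u` writes `cᶻ - bʸ` in the form `Y Aᵐ - X Bᵐ` with `A = cᵘ`, `B = bᵛ`. -/
theorem exists_quotient (hu : 0 < u) (h : v * z ≤ u * y) : ∃ m r s, r < u ∧ z = u * m + r ∧
    c ^ z = c ^ r * (c ^ u) ^ m ∧ b ^ y = b ^ s * (b ^ v) ^ m := by
  obtain ⟨m, r, hr, rfl⟩ : ∃ m r, r < u ∧ z = u * m + r :=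
    ⟨z / u, z % u, z.mod_lt hu, (z.div_add_mod u).symm⟩
  have hvm : v * m ≤ y := Nat.le_of_mul_le_mul_left (by nlinarith) hu
  obtain ⟨s, rfl⟩ := Nat.exists_eq_add_of_le hvm
  exact ⟨m, r, s, hr, rfl, by rw [pow_add, pow_mul, mul_comm],
    by rw [pow_add, pow_mul, mul_comm]⟩

theorem SmallGap.mul_pow_four_le {A B u m r : ℕ} (h : SmallGap A B u)
    (h_long : 16 * B < 25 * (u * m + r) * (A - B)) (hr : r < u) : 2 ^ 16 * A ^ 4 ≤ 2 ^ m := by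
  have hL : 4 * Nat.log2 A + 20 ≤ m := by
    by_contra! hm
    have h_le : u * m + r ≤ u * (4 * Nat.log2 A + 20) := by nlinarith
    have h_mul := Nat.mul_le_mul_left (25 * (A - B)) h_le
    nlinarith [h.2]
  calc 2 ^ 16 * A ^ 4 ≤ 2 ^ 16 * (2 ^ (Nat.log2 A + 1)) ^ 4 := by
        gcongr
        exact Nat.lt_log2_self.le
    _ = 2 ^ (4 * Nat.log2 A + 20) := by ring
    _ ≤ 2 ^ m := Nat.pow_le_pow_right two_pos hL

theorem pow_lt_sq_of_two_le (hc : 2 ≤ c) (hb : 2 ≤ b) (hu : 2 ≤ u) (hv : 2 ≤ v)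
    (hBA : b ^ v < c ^ u) (hd : 16 * (c ^ u - b ^ v) ^ 2 < c ^ u) (huz : u < z) :
    (c : ℤ) ^ z < 15 * ((c : ℤ) ^ z - (b : ℤ) ^ y) ^ 2 := by
  by_contra! hE
  have h_cases := smallGap_or_exceptional hc hb hu hv hBA hd
  have hA : 2048 ≤ c ^ u := by
    rcases h_cases with ⟨h, -⟩ | h
    · obtain ⟨rfl, rfl⟩ := Prod.mk.inj h
      norm_num
    · exact h.1
  have hP : 27 * u ^ 2 ≤ c ^ z :=
    (twenty_seven_mul_sq_le hA (Nat.pow_le_pow_left hc u)).trans (two_mul_pow_le_pow hc huz)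
  have h_exponents := mul_lt_mul_of_sq_le hb (by omega) hBA huz hP hE
  have h_long := sixteen_mul_lt hb (by omega) hBA hP hE h_exponents
  obtain ⟨m, r, s, hr, rfl, hc_pow, hb_pow⟩ :=
    exists_quotient (c := c) (b := b) (by omega) h_exponents.le
  zify at hc_pow hb_pow
  rw [hc_pow, hb_pow] at hE
  refine hE.not_gt ?_
  rcases h_cases with ⟨hcu, hbv⟩ | h
  · obtain ⟨rfl, rfl⟩ := Prod.mk.inj hcu
    obtain ⟨rfl, rfl⟩ := Prod.mk.inj hbv
    have hr_pow : 13 ^ r ≤ 13 ^ 2 := Nat.pow_le_pow_right (by norm_num) (by omega)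
    exact_mod_cast mul_pow_2197_lt_sq (Y := 13 ^ r) (X := 3 ^ s) (m := m) (by omega) hr_pow
      (by positivity)
  · exact_mod_cast mul_pow_lt_sq_of_two_mul_le (Y := c ^ r) (X := b ^ s) hA hBA hd
      (h.mul_pow_four_le h_long hr) (two_mul_pow_le_pow hc hr) (by positivity)

end BothExponents

section TwoSolutions

/-- The distinct powers `cᶻ` and `bʸ` satisfy `|cᶻ - bʸ| < max(c^(z/2), b^(y/2)) / 4`, with both
sides squared to remain within the integers. -/
def ClosePowers (c b z y : ℕ) : Prop :=
  (c : ℤ) ^ z ≠ (b : ℤ) ^ y ∧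
    16 * ((c : ℤ) ^ z - (b : ℤ) ^ y) ^ 2 < max ((c : ℤ) ^ z) ((b : ℤ) ^ y)

variable {c b u v z y z' y' : ℕ}

theorem rpow_half_sq (a n : ℕ) : ((a : ℝ) ^ ((n : ℝ) / 2)) ^ 2 = (a : ℝ) ^ n := by
  rw [← Real.rpow_natCast, ← Real.rpow_mul a.cast_nonneg]
  norm_num

theorem closePowers_of_abs_lt
    (h : 0 < |(c : ℤ) ^ z - (b : ℤ) ^ y| ∧
      ((|(c : ℤ) ^ z - (b : ℤ) ^ y| : ℤ) : ℝ) <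
        (1 / 4) * max ((c : ℝ) ^ ((z : ℝ) / 2)) ((b : ℝ) ^ ((y : ℝ) / 2))) :
    ClosePowers c b z y := by
  obtain ⟨h_pos, h_lt⟩ := h
  refine ⟨sub_ne_zero.1 (abs_pos.1 h_pos), ?_⟩
  have h_sq : (4 * ((|(c : ℤ) ^ z - (b : ℤ) ^ y| : ℤ) : ℝ)) ^ 2 <
      max ((c : ℝ) ^ z) ((b : ℝ) ^ y) := by
    rw [← rpow_half_sq c, ← rpow_half_sq b, ← pow_left_monotoneOn.map_max
      (Set.mem_Ici.2 (by positivity)) (Set.mem_Ici.2 (by positivity))]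
    exact pow_lt_pow_left₀ (by linarith) (by positivity) two_ne_zero
  rw [mul_pow] at h_sq
  rw [← sq_abs]
  norm_num at h_sq ⊢
  exact_mod_cast h_sq

namespace ClosePowers

theorem symm (h : ClosePowers c b z y) : ClosePowers b c y z := by
  refine ⟨h.1.symm, ?_⟩
  rw [max_comm, ← neg_sub, neg_sq]
  exact h.2

theorem one_le_abs (h : ClosePowers c b z y) : 1 ≤ |(c : ℤ) ^ z - (b : ℤ) ^ y| :=
  Int.one_le_abs (sub_ne_zero.2 h.1)

theorem sq_le (h : ClosePowers c b z y) :
    15 * ((c : ℤ) ^ z - (b : ℤ) ^ y) ^ 2 ≤ (c : ℤ) ^ z := by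
  have h_one := h.one_le_abs
  have h_lt := h.2
  have h_neg := neg_abs_le ((c : ℤ) ^ z - (b : ℤ) ^ y)
  rw [← sq_abs] at h_lt ⊢
  rcases lt_max_iff.1 h_lt with h_left | h_right <;> nlinarith

theorem one_lt_pow (h : ClosePowers c b z y) : 1 < c ^ z := by
  have h_one := h.one_le_abs
  have h_sq := h.sq_le
  rw [← sq_abs] at h_sq
  zify
  nlinarith

theorem two_le (h : ClosePowers c b z y) : 2 ≤ c := by
  by_contra! hc
  exact h.one_lt_pow.not_ge (pow_le_one₀ c.zero_le (by omega))

theorem exponent_pos (h : ClosePowers c b z y) : 0 < z := by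
  refine Nat.pos_of_ne_zero ?_
  rintro rfl
  exact h.one_lt_pow.ne' (pow_zero c)

theorem fifteen_mul_pow_le (h : ClosePowers c b z y) : 15 * c ^ z ≤ 16 * b ^ y := by
  have h_one := h.one_le_abs
  have h_sq := h.symm.sq_le
  have h_abs := le_abs_self ((c : ℤ) ^ z - (b : ℤ) ^ y)
  rw [← neg_sub, neg_sq, ← sq_abs] at h_sq
  zify
  nlinarith

theorem exponent_mono (h : ClosePowers c b z y) (h' : ClosePowers c b z' y') (hz : z ≤ z') :
    y ≤ y' := by
  by_contra! hy
  have h_double : 2 * b ^ y' ≤ b ^ y := two_mul_pow_le_pow h.symm.two_le hy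
  have h_pow : c ^ z ≤ c ^ z' := Nat.pow_le_pow_right (by linarith [h.two_le]) hz
  linarith [h'.fifteen_mul_pow_le, h.symm.fifteen_mul_pow_le, h'.one_lt_pow]

theorem sixteen_mul_sq_lt (h : ClosePowers c b z y) (h_lt : b ^ y < c ^ z) :
    16 * (c ^ z - b ^ y) ^ 2 < c ^ z := by
  have h_sq := h.2
  rw [max_eq_left (by exact_mod_cast h_lt.le)] at h_sq
  zify [h_lt.le]
  exact h_sq

theorem mul_exponent_le_of_le (h : ClosePowers c b z y) (h_lt : b ^ v ≤ c) : v * z ≤ y := by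
  by_contra! hy
  have h_double : 2 * b ^ y ≤ (b ^ v) ^ z := by
    rw [← pow_mul]
    exact two_mul_pow_le_pow h.symm.two_le hy
  have h_pow : (b ^ v) ^ z ≤ c ^ z := Nat.pow_le_pow_left h_lt z
  linarith [h.fifteen_mul_pow_le, h.one_lt_pow]

theorem exponent_le_mul_of_le (h : ClosePowers c b z y) (h_lt : b ≤ c ^ u) : z ≤ u * y := by
  by_contra! hz
  have h_double : 2 * (c ^ u) ^ y ≤ c ^ z := by
    rw [← pow_mul]
    exact two_mul_pow_le_pow h.two_le hz
  have h_pow : b ^ y ≤ (c ^ u) ^ y := Nat.pow_le_pow_left h_lt y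
  linarith [h.fifteen_mul_pow_le, h.one_lt_pow]

end ClosePowers

theorem twenty_five_le_pow (hc : 2 ≤ c) (hu : 2 ≤ u) (h : 17 ≤ c ^ u) : 25 ≤ c ^ u := by
  rcases le_or_gt 5 c with hc_large | hc_small
  · calc 25 = 5 ^ 2 := by norm_num
      _ ≤ c ^ u := pow_le_pow hc_large (by omega) hu
  rcases le_or_gt 5 u with hu_large | hu_small
  · calc 25 ≤ 2 ^ 5 := by norm_num
      _ ≤ c ^ u := pow_le_pow hc (by omega) hu_large
  interval_cases c <;> interval_cases u <;> omega

theorem not_closePowers_seventeen (hB : b ^ v < 17) (hv : v ≠ 0)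
    (hd : 16 * (17 - b ^ v) ^ 2 < 17) (hz : 2 ≤ z) : ¬ ClosePowers 17 b z y := by
  intro h
  have h_pow : b ^ v = 16 := by
    have : 17 - b ^ v < 2 := by nlinarith
    omega
  have hb : b ∣ 2 ^ 4 := by
    calc b ∣ b ^ v := dvd_pow_self b hv
      _ = 2 ^ 4 := h_pow
  obtain ⟨j, -, rfl⟩ := (Nat.dvd_prime_pow Nat.prime_two).1 hb
  have h_sq := h.sq_le
  push_cast at h_sq
  rw [← pow_mul] at h_sq
  exact h_sq.not_gt (seventeen_pow_lt_sq hz)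

theorem not_closePowers_of_left_exponent_one (h₁ : ClosePowers c b 1 v) (hz : 2 ≤ z)
    (hBA : b ^ v < c) : ¬ ClosePowers c b z y := by
  intro h₂
  have hd : 16 * (c - b ^ v) ^ 2 < c := by simpa using h₁.sixteen_mul_sq_lt (by simpa)
  have hc : 17 ≤ c := by
    have : 1 ≤ (c - b ^ v) ^ 2 := Nat.one_le_pow _ _ (by omega)
    omega
  rcases hc.eq_or_lt with rfl | hc
  · exact not_closePowers_seventeen hBA h₁.symm.exponent_pos.ne' hd hz h₂
  obtain ⟨s, rfl⟩ := Nat.exists_eq_add_of_le (h₂.mul_exponent_le_of_le hBA.le)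
  have hX : 0 < b ^ s := pow_pos (by linarith [h₁.symm.two_le]) s
  refine h₂.sq_le.not_gt ?_
  rw [pow_add, pow_mul, mul_comm (((b : ℤ) ^ v) ^ z)]
  exact_mod_cast pow_lt_sq hc hBA hd hz hX

theorem not_closePowers_of_right_exponent_one (h₁ : ClosePowers c b u 1) (hu : 2 ≤ u)
    (hy : 2 ≤ y) (hBA : b < c ^ u) : ¬ ClosePowers c b z y := by
  intro h₂
  have hd : 16 * (c ^ u - b) ^ 2 < c ^ u := by simpa using h₁.sixteen_mul_sq_lt (by simpa)
  have hA : 25 ≤ c ^ u := by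
    have : 1 ≤ (c ^ u - b) ^ 2 := Nat.one_le_pow _ _ (by omega)
    exact twenty_five_le_pow h₁.two_le hu (by omega)
  obtain ⟨s, hs⟩ := Nat.exists_eq_add_of_le (h₂.exponent_le_mul_of_le hBA.le)
  have hX : 0 < c ^ s := pow_pos (by linarith [h₁.two_le]) s
  have h_gap := mul_pow_lt_sq hA hBA hd hy hX
  have h_pow : (c ^ u) ^ y = c ^ s * c ^ z := by rw [← pow_mul, hs, pow_add, mul_comm]
  zify at h_pow
  push_cast at h_gap
  rw [h_pow] at h_gap
  have h_scaled := mul_le_mul_of_nonneg_left h₂.sq_le (sq_nonneg ((c : ℤ) ^ s))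
  nlinarith

theorem not_closePowers_of_lt_of_pow_lt (h₁ : ClosePowers c b u v) (huz : u < z) (hvy : v < y)
    (hBA : b ^ v < c ^ u) : ¬ ClosePowers c b z y := by
  have hu := h₁.exponent_pos
  have hv := h₁.symm.exponent_pos
  obtain rfl | hu : u = 1 ∨ 2 ≤ u := by omega
  · exact not_closePowers_of_left_exponent_one h₁ (by omega) (by simpa using hBA)
  obtain rfl | hv : v = 1 ∨ 2 ≤ v := by omega
  · exact not_closePowers_of_right_exponent_one h₁ hu (by omega) (by simpa using hBA)
  · exact fun h₂ ↦ h₂.sq_le.not_gt (pow_lt_sq_of_two_le h₁.two_le h₁.symm.two_le hu hv hBA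
      (h₁.sixteen_mul_sq_lt hBA) huz)

theorem not_closePowers_of_lt (h₁ : ClosePowers c b u v) (huz : u < z) :
    ¬ ClosePowers c b z y := by
  intro h₂
  have hvy : v < y := by
    by_contra! hy
    exact huz.not_ge (h₂.symm.exponent_mono h₁.symm hy)
  rcases lt_trichotomy (b ^ v) (c ^ u) with h_lt | h_eq | h_gt
  · exact not_closePowers_of_lt_of_pow_lt h₁ huz hvy h_lt h₂
  · exact h₁.1 (by exact_mod_cast h_eq.symm)
  · exact not_closePowers_of_lt_of_pow_lt h₁.symm hvy huz h_gt h₂.symm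

end TwoSolutions

end PillaiPade

/-- Lemma 2.13: for positive integers `c`, `b`, there is at most one pair of
positive integers `(z, y)` with `0 < |c^z - b^y| < (1/4) max(c^(z/2), b^(y/2))`. -/
theorem stmt_18 (c b : ℕ) (hc : 0 < c) (hb : 0 < b)
    (z₁ y₁ z₂ y₂ : ℕ) (hz₁ : 0 < z₁) (hy₁ : 0 < y₁) (hz₂ : 0 < z₂) (hy₂ : 0 < y₂)
    (h1 : 0 < |(c : ℤ) ^ z₁ - (b : ℤ) ^ y₁| ∧
      ((|(c : ℤ) ^ z₁ - (b : ℤ) ^ y₁| : ℤ) : ℝ) <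
        (1 / 4) * max ((c : ℝ) ^ ((z₁ : ℝ) / 2)) ((b : ℝ) ^ ((y₁ : ℝ) / 2)))
    (h2 : 0 < |(c : ℤ) ^ z₂ - (b : ℤ) ^ y₂| ∧
      ((|(c : ℤ) ^ z₂ - (b : ℤ) ^ y₂| : ℤ) : ℝ) <
        (1 / 4) * max ((c : ℝ) ^ ((z₂ : ℝ) / 2)) ((b : ℝ) ^ ((y₂ : ℝ) / 2))) :
    (z₁, y₁) = (z₂, y₂) := by
  have h₁ := PillaiPade.closePowers_of_abs_lt h1
  have h₂ := PillaiPade.closePowers_of_abs_lt h2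
  rcases lt_trichotomy z₁ z₂ with h_lt | rfl | h_gt
  · exact absurd h₂ (PillaiPade.not_closePowers_of_lt h₁ h_lt)
  · rw [(h₁.exponent_mono h₂ le_rfl).antisymm (h₂.exponent_mono h₁ le_rfl)]
  · exact absurd h₁ (PillaiPade.not_closePowers_of_lt h₂ h_gt)
end

section
/- Let $a$, $b$, $c$ be distinct primes with $a < b$, $(a,b,c)$ not one of $(2,3,5)$, $(2,3,11)$, $(2,5,3)$, $(2,7,3)$, $(3,5,2)$, $(3,13,2)$, and suppose the equation $a^x + b^y = c^z$ has more than one solution in positive integers. If moreover $b \equiv 13 \pmod{24}$ and $c \equiv 17 \pmod{24}$, then there exist odd integers $y_2 > 1$ and $z_2 > 1$ such that $4 + b^{y_2} = c^{z_2}$. -/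
/-!
Parity gives `a = 2`, and reducing modulo `3` and `8` shows that `z` is odd and that either `x = 2`
with `y` odd, or `x` and `y` are both even. In the second case `2 ^ (x / 2) + b ^ (y / 2) i` is a
`z`-th power in `ℤ[i]`; comparing the `2`-adic valuations of real parts (if `z ≡ 1 (mod 4)`) or
reducing modulo `5` (if `z ≡ 3 (mod 4)`) forces `z = 1`. As the prime `c` is a sum of two squares in
only one way, at most one solution is of this kind, so some solution has `x = 2`. If two do, the
larger one has `y, z > 1`. Otherwise the solution with `x = 2` comes with one of the second kind:
then `y = 1` is impossible by size, and `z = 1` would make `2` or `-2` a square modulo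
`b ≡ 5 (mod 8)` or contradict a congruence modulo `5`.
-/

section GaussianPowers

theorem exists_pow_eq_mul_re_mul_im {α : GaussianInt} (hα : Odd α.norm) {n : ℕ} (hn : Odd n) :
    ∃ A B : ℤ, Odd A ∧ Odd B ∧ α ^ n = ⟨α.re * A, α.im * B⟩ := by
  obtain ⟨k, rfl⟩ := hn
  have hsub : Odd (α.re ^ 2 - α.im ^ 2) := by
    have : α.re ^ 2 - α.im ^ 2 = α.norm - 2 * α.im ^ 2 := by rw [Zsqrtd.norm_def]; ring
    exact this ▸ hα.sub_even (even_two_mul _)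
  induction k with
  | zero => exact ⟨1, 1, odd_one, odd_one, by simp⟩
  | succ k ih =>
    obtain ⟨A, B, hA, hB, h⟩ := ih
    refine ⟨A * (α.re ^ 2 - α.im ^ 2) - 2 * (α.im ^ 2 * B),
      2 * (α.re ^ 2 * A) + B * (α.re ^ 2 - α.im ^ 2),
      (hA.mul hsub).sub_even (even_two_mul _), (even_two_mul _).add_odd (hB.mul hsub), ?_⟩
    rw [show 2 * (k + 1) + 1 = 2 * k + 1 + 2 by ring, pow_add, h, pow_two]
    ext <;> simp only [Zsqrtd.re_mul, Zsqrtd.im_mul] <;> ring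

theorem exists_pow_two_pow_eq {α : GaussianInt} (hre : Even α.re) (him : Odd α.im) {s : ℕ}
    (hs : 2 ≤ s) :
    ∃ r w : ℤ, Odd w ∧ α ^ 2 ^ s = ⟨1 + 2 ^ (s + 1) * r, 2 ^ s * (α.re * w)⟩ := by
  obtain ⟨e, he⟩ := hre.two_dvd
  induction s, hs using Nat.le_induction with
  | base =>
    have hsub : Odd (α.re ^ 2 - α.im ^ 2) := (hre.pow_of_ne_zero two_ne_zero).sub_odd him.pow
    obtain ⟨r, hr⟩ := Int.eight_dvd_sq_sub_one_of_odd hsub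
    refine ⟨r - 2 * (e * α.im) ^ 2, α.im * (α.re ^ 2 - α.im ^ 2), him.mul hsub, ?_⟩
    rw [show 2 ^ 2 = 2 * 2 by rfl, pow_mul, pow_two, pow_two]
    ext <;> simp only [Zsqrtd.re_mul, Zsqrtd.im_mul]
    · rw [he] at hr ⊢
      linear_combination hr
    · ring
  | succ s hs ih =>
    obtain ⟨r, w, hw, h⟩ := ih
    obtain ⟨t, rfl⟩ := Nat.exists_eq_add_of_le' hs
    refine ⟨r + 2 ^ (t + 2) * r ^ 2 - 2 ^ (t + 2) * (e * w) ^ 2, (1 + 2 ^ (t + 2 + 1) * r) * w,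
      Odd.mul ⟨2 ^ (t + 2) * r, by ring⟩ hw, ?_⟩
    rw [pow_succ 2 (t + 2), pow_mul, h, pow_two]
    ext <;> simp only [Zsqrtd.re_mul, Zsqrtd.im_mul]
    · rw [he]
      ring
    · ring

theorem exists_re_pow_eq_re_mul {α : GaussianInt} (hre : Even α.re) (him : Odd α.im) {z : ℕ}
    (hz : z % 4 = 1) (hz1 : z ≠ 1) :
    ∃ (s : ℕ) (k : ℤ), 2 ≤ s ∧ Odd k ∧ (α ^ z).re = α.re * (1 + 2 ^ s * k) := by
  obtain ⟨s, n, hn, hsn⟩ := Nat.exists_eq_two_pow_mul_odd (n := z - 1) (by omega)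
  have hs : 2 ≤ s := by
    by_contra! hs
    obtain ⟨k, rfl⟩ := hn
    interval_cases s <;> omega
  have hα : Odd α.norm := by
    rw [show α.norm = α.re ^ 2 + α.im ^ 2 by rw [Zsqrtd.norm_def]; ring]
    exact (hre.pow_of_ne_zero two_ne_zero).add_odd him.pow
  obtain ⟨A, B, hA, hB, hAB⟩ := exists_pow_eq_mul_re_mul_im hα hn
  obtain ⟨r, w, hw, hpow⟩ := exists_pow_two_pow_eq (α := α ^ n) (s := s)
    (by rw [hAB]; exact hre.mul_right _) (by rw [hAB]; exact him.mul hB) hs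
  refine ⟨s, 2 * r - α.im * A * w, hs, (even_two_mul r).sub_odd ((him.mul hA).mul hw), ?_⟩
  rw [show z = n * 2 ^ s + 1 by rw [mul_comm, ← hsn]; omega, pow_succ, pow_mul, hpow, hAB]
  simp only [Zsqrtd.re_mul]
  ring

theorem eq_one_of_re_pow_eq_or_neg {α : GaussianInt} (hre : Even α.re) (hre0 : α.re ≠ 0)
    (him : Odd α.im) {z : ℕ} (hz : z % 4 = 1)
    (h : (α ^ z).re = α.re ∨ (α ^ z).re = -α.re) : z = 1 := by
  by_contra hz1
  obtain ⟨s, k, hs, ⟨f, rfl⟩, hrez⟩ := exists_re_pow_eq_re_mul hre him hz hz1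
  obtain ⟨t, rfl⟩ := Nat.exists_eq_add_of_le' hs
  have hunit : (1 + 2 ^ (t + 2) * (2 * f + 1) : ℤ) = 1 ∨
      (1 + 2 ^ (t + 2) * (2 * f + 1) : ℤ) = -1 := by
    rw [hrez] at h
    refine h.imp (fun h ↦ mul_left_cancel₀ hre0 ?_) fun h ↦ mul_left_cancel₀ hre0 ?_ <;>
    linarith
  rcases hunit with h | h
  · rcases mul_eq_zero.1 (add_eq_left.1 h) with h | h
    · exact absurd h (by positivity)
    · omega
  · rw [pow_add, mul_right_comm] at h
    omega

end GaussianPowers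

section SumOfTwoSquares

theorem pow_four_eq_one_of_isUnit {u : GaussianInt} (hu : IsUnit u) : u ^ 4 = 1 := by
  have hnorm : u.re ^ 2 + u.im ^ 2 = 1 := by
    have := (Zsqrtd.norm_eq_one_iff' (by norm_num) u).2 hu
    rw [Zsqrtd.norm_def] at this
    linear_combination this
  have hprod : u.re * u.im = 0 := by
    by_contra hne
    have hre : 0 < u.re ^ 2 := sq_pos_of_ne_zero (left_ne_zero_of_mul hne)
    have him : 0 < u.im ^ 2 := sq_pos_of_ne_zero (right_ne_zero_of_mul hne)
    omega
  have hsq : u ^ 4 = ⟨(u.re ^ 2 + u.im ^ 2) ^ 2 - 8 * (u.re * u.im) ^ 2,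
      4 * (u.re * u.im) * (u.re ^ 2 - u.im ^ 2)⟩ := by
    rw [show 4 = 2 * 2 by rfl, pow_mul, pow_two, pow_two]
    ext <;> simp only [Zsqrtd.re_mul, Zsqrtd.im_mul] <;> ring
  rw [hsq, hnorm, hprod]
  ext <;> simp

theorem isCoprime_star_of_odd_norm {α : GaussianInt} (hα : IsCoprime α.re α.im)
    (hodd : Odd α.norm) : IsCoprime α (star α) := by
  obtain ⟨p, q, hpq⟩ := hα
  obtain ⟨n, hn⟩ := hodd
  rw [Zsqrtd.norm_def] at hn
  refine ⟨star α - n * ⟨p, -q⟩, -n * ⟨p, q⟩, ?_⟩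
  ext <;>
    simp only [Zsqrtd.re_intCast, Zsqrtd.re_add, Zsqrtd.re_sub, Zsqrtd.re_mul, Zsqrtd.re_neg,
      Zsqrtd.re_star, Zsqrtd.re_one, Zsqrtd.im_intCast, Zsqrtd.im_add, Zsqrtd.im_sub, Zsqrtd.im_mul,
      Zsqrtd.im_neg, Zsqrtd.im_star, Zsqrtd.im_one]
  · linear_combination hn - 2 * n * hpq
  · ring

theorem exists_norm_eq_and_pow_eq {x y c : ℤ} {z : ℕ} (hxy : IsCoprime x y) (hc : Odd c)
    (hz : Odd z) (h : x ^ 2 + y ^ 2 = c ^ z) :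
    ∃ α : GaussianInt, α.norm = c ∧ α ^ z = ⟨x, y⟩ := by
  have hnorm : (⟨x, y⟩ : GaussianInt).norm = c ^ z := by rw [← h, Zsqrtd.norm_def]; ring
  have hcop := isCoprime_star_of_odd_norm (α := ⟨x, y⟩) hxy (hnorm ▸ hc.pow)
  have hprod : (⟨x, y⟩ : GaussianInt) * star ⟨x, y⟩ = (c : GaussianInt) ^ z := by
    rw [← Zsqrtd.norm_eq_mul_conj, hnorm, Int.cast_pow]
  obtain ⟨δ, u, hu⟩ := exists_associated_pow_of_mul_eq_pow' hcop hprod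
  -- The unit `u` is a `z`-th power: `u ^ 4 = 1` and `z ^ 2 ≡ 1 (mod 4)`, so `u = (u ^ z) ^ z`.
  have hpow : (δ * u ^ z) ^ z = ⟨x, y⟩ := by
    have hzz : z * z % 4 = 1 := by
      rcases Nat.odd_mod_four_iff.1 (Nat.odd_iff.1 hz) with h4 | h4 <;> simp [Nat.mul_mod, h4]
    rw [mul_pow, ← pow_mul, pow_eq_pow_mod _ (pow_four_eq_one_of_isUnit u.isUnit), hzz, pow_one, hu]
  refine ⟨δ * u ^ z, hz.strictMono_pow.injective ?_, hpow⟩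
  exact (map_pow Zsqrtd.normMonoidHom _ z).symm.trans (hpow ▸ hnorm)

theorem re_eq_or_neg_of_re_pow_eq_two_pow {α : GaussianInt} (hα : Odd α.norm) {m z : ℕ} (hz : Odd z)
    (h : (α ^ z).re = 2 ^ m) : α.re = 2 ^ m ∨ α.re = -2 ^ m := by
  obtain ⟨A, B, hA, -, hAB⟩ := exists_pow_eq_mul_re_mul_im hα hz
  rw [hAB] at h
  have hA2 : IsCoprime A (2 ^ m) := (Int.isCoprime_two_right.2 hA).pow_right
  rcases Int.isUnit_iff.1 (hA2.isUnit_of_dvd (Dvd.intro_left _ h)) with rfl | rfl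
  · left; linarith
  · right; linarith

theorem mod_four_ne_three_of_sq_add_sq_eq_pow {x y w c : ℤ} {z : ℕ} (hx : ¬ 5 ∣ x) (hy : ¬ 5 ∣ y)
    (hw : ¬ 5 ∣ w) (hc : ¬ 5 ∣ c) (h : x ^ 2 + y ^ 2 = c) (h' : x ^ 2 + w ^ 2 = c ^ z) :
    z % 4 ≠ 3 := by
  intro hz
  have cast_ne_zero {k : ℤ} (hk : ¬ 5 ∣ k) : (k : ZMod 5) ≠ 0 :=
    mt (ZMod.intCast_zmod_eq_zero_iff_dvd k 5).1 hk
  have pow_four : ∀ r : ZMod 5, r ≠ 0 → r ^ 4 = 1 := by decide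
  have cube_ne : ∀ p q r : ZMod 5, p ≠ 0 → q ≠ 0 → r ≠ 0 → p ^ 2 + q ^ 2 ≠ 0 →
      p ^ 2 + r ^ 2 ≠ (p ^ 2 + q ^ 2) ^ 3 := by decide
  have hmod : (x ^ 2 + y ^ 2 : ZMod 5) = c := by exact_mod_cast congrArg Int.cast h
  have hmod' : (x ^ 2 + w ^ 2 : ZMod 5) = c ^ 3 := by
    have : (c : ZMod 5) ^ z = c ^ 3 := by
      rw [pow_eq_pow_mod z (pow_four c (cast_ne_zero hc)), hz]
    rw [← this]
    exact_mod_cast congrArg Int.cast h'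
  exact cube_ne x y w (cast_ne_zero hx) (cast_ne_zero hy) (cast_ne_zero hw)
    (hmod ▸ cast_ne_zero hc) (hmod ▸ hmod')

theorem eq_one_of_two_pow_add_sq_eq_pow {m z : ℕ} {y c : ℤ} (hm : m ≠ 0) (hy : Odd y)
    (hy5 : ¬ 5 ∣ y) (hc5 : ¬ 5 ∣ c) (hz : Odd z) (h : 2 ^ (2 * m) + y ^ 2 = c ^ z) : z = 1 := by
  have h2m : Even ((2 : ℤ) ^ m) := even_two.pow_of_ne_zero hm
  rw [pow_mul'] at h
  have hc : Odd c :=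
    (Int.odd_pow' hz.pos.ne').1 (h ▸ (h2m.pow_of_ne_zero two_ne_zero).add_odd hy.pow)
  obtain ⟨α, hnorm, hpow⟩ :=
    exists_norm_eq_and_pow_eq (Int.isCoprime_two_left.2 hy).pow_left hc hz h
  have hα : Odd α.norm := hnorm ▸ hc
  have hre := re_eq_or_neg_of_re_pow_eq_two_pow hα hz (congrArg Zsqrtd.re hpow)
  have him : α.im ∣ y := by
    obtain ⟨A, B, -, -, hAB⟩ := exists_pow_eq_mul_re_mul_im hα hz
    exact ⟨B, congrArg Zsqrtd.im (hpow.symm.trans hAB)⟩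
  have hz4 : z % 4 = 1 := by
    refine (Nat.odd_mod_four_iff.1 (Nat.odd_iff.1 hz)).resolve_right ?_
    have hre2 : α.re ^ 2 = (2 ^ m) ^ 2 := sq_eq_sq_iff_eq_or_eq_neg.2 hre
    have h25 : ¬ (5 : ℤ) ∣ 2 ^ m := by
      exact_mod_cast mt Nat.prime_five.dvd_of_dvd_pow (by norm_num : ¬ 5 ∣ 2)
    refine mod_four_ne_three_of_sq_add_sq_eq_pow h25 (fun h5 ↦ hy5 (h5.trans him)) hy5 hc5 ?_ h
    rw [← hre2, ← hnorm, Zsqrtd.norm_def]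
    ring
  have him_odd : Odd α.im := by
    obtain ⟨B, rfl⟩ := him
    exact (Int.odd_mul.1 hy).1
  refine eq_one_of_re_pow_eq_or_neg (α := α) ?_ ?_ him_odd hz4 ?_
  · rcases hre with hre | hre <;> simpa only [hre, even_neg]
  · rcases hre with hre | hre <;> simp [hre]
  · rw [hpow]
    rcases hre with hre | hre <;> simp [hre]

theorem mul_eq_mul_of_sq_add_sq_eq_prime {p a b c d : ℕ} (hp : p.Prime) (h : a ^ 2 + b ^ 2 = p)
    (h' : c ^ 2 + d ^ 2 = p) (had : a ≠ d) : a * d = b * c := by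
  have hlt : a * d + b * c < p := by
    zify at h h' had ⊢
    linarith [sq_pos_of_ne_zero (sub_ne_zero.2 had), sq_nonneg (b - c : ℤ)]
  have hdvd : (p : ℤ) ∣ (a * d - b * c) * (a * d + b * c) := by
    zify at h h'
    exact ⟨d ^ 2 - b ^ 2, by linear_combination (d : ℤ) ^ 2 * h - b ^ 2 * h'⟩
  rcases (Nat.prime_iff_prime_int.1 hp).dvd_or_dvd hdvd with hsub | hadd
  · have habs : |(a * d - b * c : ℤ)| < p := abs_lt.2 ⟨by omega, by omega⟩
    exact_mod_cast sub_eq_zero.1 (Int.eq_zero_of_abs_lt_dvd hsub habs)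
  · have := Nat.eq_zero_of_dvd_of_lt (by exact_mod_cast hadd) hlt
    omega

theorem eq_and_eq_or_eq_and_eq_of_sq_add_sq_eq_prime {p a b c d : ℕ} (hp : p.Prime)
    (h : a ^ 2 + b ^ 2 = p) (h' : c ^ 2 + d ^ 2 = p) : (a = c ∧ b = d) ∨ (a = d ∧ b = c) := by
  rcases eq_or_ne a d with rfl | had
  · exact .inr ⟨rfl, Nat.pow_left_injective two_ne_zero (by simp only; omega)⟩
  have hac : a = c := by
    have hcross := mul_eq_mul_of_sq_add_sq_eq_prime hp h h' had
    have : a ^ 2 * p = c ^ 2 * p := by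
      calc a ^ 2 * p = (a * c) ^ 2 + (a * d) ^ 2 := by rw [← h']; ring
        _ = c ^ 2 * p := by rw [hcross, ← h]; ring
    exact Nat.pow_left_injective two_ne_zero (Nat.eq_of_mul_eq_mul_right hp.pos this)
  subst hac
  exact .inl ⟨rfl, Nat.pow_left_injective two_ne_zero (by simp only; omega)⟩

theorem two_pow_add_pow_eq_prime_unique {b p m n m' n' : ℕ} (hp : p.Prime) (hb : Odd b)
    (hb1 : 1 < b) (hm : m ≠ 0) (h : 2 ^ (2 * m) + b ^ (2 * n) = p)
    (h' : 2 ^ (2 * m') + b ^ (2 * n') = p) : m = m' ∧ n = n' := by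
  rw [pow_mul', pow_mul' b] at h h'
  rcases eq_and_eq_or_eq_and_eq_of_sq_add_sq_eq_prime hp h h' with ⟨h2, hbn⟩ | ⟨h2, -⟩
  · exact ⟨Nat.pow_right_injective le_rfl h2, Nat.pow_right_injective hb1 hbn⟩
  · have : Even (2 ^ m) := even_two.pow_of_ne_zero hm
    exact absurd (h2 ▸ this) (Nat.not_even_iff_odd.2 hb.pow)

end SumOfTwoSquares

section Congruences

variable {b c x y z : ℕ}

theorem even_of_pow_add_pow_eq_pow {a : ℕ} (hb : Odd b) (hc : Odd c) (h : a ^ x + b ^ y = c ^ z) :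
    Even a := by
  by_contra ha
  have := (Nat.not_even_iff_odd.1 ha).pow (n := x) |>.add_odd (hb.pow (n := y))
  exact Nat.not_even_iff_odd.2 hc.pow (h ▸ this)

theorem even_and_odd_of_two_pow_add_pow_eq_pow (hb : b % 3 = 1) (hc : c % 3 = 2)
    (h : 2 ^ x + b ^ y = c ^ z) : Even x ∧ Odd z := by
  have hmod : (-1 : ZMod 3) ^ x + 1 = (-1) ^ z := by
    have hb' : (b : ZMod 3) = 1 := (ZMod.natCast_eq_natCast_iff' b 1 3).2 hb
    have hc' : (c : ZMod 3) = -1 := (ZMod.natCast_eq_natCast_iff' c 2 3).2 hc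
    have h3 := congrArg (Nat.cast : ℕ → ZMod 3) h
    push_cast at h3
    rwa [hb', hc', one_pow, show (2 : ZMod 3) = -1 by rfl] at h3
  rcases x.even_or_odd with hx | hx <;> rcases z.even_or_odd with hz | hz <;>
    rw [hx.neg_one_pow, hz.neg_one_pow] at hmod
  exacts [absurd hmod (by decide), ⟨hx, hz⟩, absurd hmod (by decide), absurd hmod (by decide)]

theorem odd_iff_of_two_pow_add_pow_eq_pow (hb : b % 8 = 5) (hc : c % 8 = 1) (hx : 2 ≤ x)
    (h : 2 ^ x + b ^ y = c ^ z) : Odd y ↔ x = 2 := by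
  have hmod : (2 : ZMod 8) ^ x + 5 ^ y = 1 := by
    have hb' : (b : ZMod 8) = 5 := (ZMod.natCast_eq_natCast_iff' b 5 8).2 hb
    have hc' : (c : ZMod 8) = 1 := (ZMod.natCast_eq_natCast_iff' c 1 8).2 hc
    have h8 := congrArg (Nat.cast : ℕ → ZMod 8) h
    push_cast at h8
    rwa [hb', hc', one_pow] at h8
  have hfive : (5 : ZMod 8) ^ y = if Odd y then 5 else 1 := by
    rcases y.even_or_odd' with ⟨k, rfl | rfl⟩
    · simp [pow_mul, show (5 : ZMod 8) ^ 2 = 1 by rfl]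
    · simp [pow_succ, pow_mul, show (5 : ZMod 8) ^ 2 = 1 by rfl]
  have htwo : (2 : ZMod 8) ^ x = if x = 2 then 4 else 0 := by
    split_ifs with hx2
    · subst hx2; rfl
    · exact pow_eq_zero_of_le (by omega : 3 ≤ x) rfl
  rw [hfive, htwo] at hmod
  split_ifs at hmod with hx2 hy hy
  · exact iff_of_true hy hx2
  · exact absurd hmod (by decide)
  · exact absurd hmod (by decide)
  · exact iff_of_false hy hx2

theorem two_pow_add_pow_eq_pow_cases (hb : b % 24 = 13) (hb5 : ¬ 5 ∣ b) (hc : c % 24 = 17)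
    (hc5 : ¬ 5 ∣ c) (hx : x ≠ 0) (h : 2 ^ x + b ^ y = c ^ z) :
    (x = 2 ∧ Odd y ∧ Odd z) ∨ ∃ m n, x = 2 * m ∧ y = 2 * n ∧ z = 1 := by
  obtain ⟨hxe, hz⟩ := even_and_odd_of_two_pow_add_pow_eq_pow (by omega) (by omega) h
  have hyx := odd_iff_of_two_pow_add_pow_eq_pow (by omega) (by omega) (by grind) h
  obtain ⟨m, rfl⟩ := hxe.two_dvd
  by_cases hm : 2 * m = 2
  · exact .inl ⟨hm, hyx.2 hm, hz⟩
  obtain ⟨n, rfl⟩ := (Nat.not_odd_iff_even.1 (mt hyx.1 hm)).two_dvd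
  refine .inr ⟨m, n, rfl, rfl, ?_⟩
  have hbn : ¬ (5 : ℤ) ∣ b ^ n := by exact_mod_cast mt Nat.prime_five.dvd_of_dvd_pow hb5
  have hbo : Odd (b : ℤ) := by exact_mod_cast Nat.odd_iff.2 (by omega)
  refine eq_one_of_two_pow_add_sq_eq_pow (m := m) (by omega) hbo.pow hbn
    (c := c) (by exact_mod_cast hc5) hz ?_
  rw [← pow_mul']
  exact_mod_cast h

theorem odd_of_four_pow_eq_four {p m : ℕ} [Fact p.Prime] (hp : p % 8 = 5)
    (h : (4 : ZMod p) ^ m = 4) : Odd m := by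
  by_contra hm
  obtain ⟨i, rfl⟩ := Nat.not_odd_iff_even.1 hm
  have hfac : ((2 : ZMod p) ^ (i + i) - 2) * (2 ^ (i + i) + 2) = 0 := by
    rw [show (4 : ZMod p) = 2 * 2 by norm_num, mul_pow] at h
    linear_combination h
  rcases mul_eq_zero.1 hfac with h2 | h2
  · have hsq : IsSquare (2 : ZMod p) := ⟨2 ^ i, by rw [← pow_add]; linear_combination -h2⟩
    rw [ZMod.exists_sq_eq_two_iff (by omega)] at hsq
    omega
  · have hsq : IsSquare (-2 : ZMod p) := ⟨2 ^ i, by rw [← pow_add]; linear_combination -h2⟩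
    rw [ZMod.exists_sq_eq_neg_two_iff (by omega)] at hsq
    omega

theorem four_pow_add_pow_eq_zero {r : ZMod 5} {m n y : ℕ} (hr : r ≠ 0) (hm : Odd m) (hy : Odd y)
    (h : 4 ^ m + r ^ (2 * n) = 4 + r ^ y) : 4 ^ m + r ^ (2 * n) = 0 := by
  have sq_eq : ∀ r : ZMod 5, r ≠ 0 → r ^ 2 = 1 ∨ r ^ 2 = -1 := by decide
  rw [show (4 : ZMod 5) = -1 by rfl, hm.neg_one_pow] at h ⊢
  rcases sq_eq r hr with hr2 | hr2
  · rw [pow_mul, hr2, one_pow, neg_add_cancel]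
  · have : (1 : ZMod 5) = -1 := by
      calc (1 : ZMod 5) = (r ^ (2 * n)) ^ 2 := by
            rw [pow_mul, hr2, pow_right_comm, neg_one_sq, one_pow]
        _ = (r ^ 2) ^ y := by rw [add_left_cancel h, pow_right_comm]
        _ = -1 := by rw [hr2, hy.neg_one_pow]
    exact absurd this (by decide)

theorem two_pow_add_pow_ne_four_add_pow {m n : ℕ} (hb : b.Prime) (hb8 : b % 8 = 5) (hb5 : ¬ 5 ∣ b)
    (hsum : ¬ 5 ∣ 2 ^ (2 * m) + b ^ (2 * n)) (hn : n ≠ 0) (hy : Odd y) :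
    2 ^ (2 * m) + b ^ (2 * n) ≠ 4 + b ^ y := by
  intro h
  have : Fact b.Prime := ⟨hb⟩
  rw [pow_mul] at h hsum
  have hm : Odd m := by
    have hmod := congrArg (Nat.cast : ℕ → ZMod b) h
    push_cast at hmod
    rw [ZMod.natCast_self, zero_pow (by omega), zero_pow hy.pos.ne', add_zero, add_zero] at hmod
    exact odd_of_four_pow_eq_four hb8 hmod
  have hb0 : (b : ZMod 5) ≠ 0 := mt (ZMod.natCast_eq_zero_iff b 5).1 hb5
  refine hsum ((ZMod.natCast_eq_zero_iff _ 5).1 ?_)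
  have h5 := congrArg (Nat.cast : ℕ → ZMod 5) h
  push_cast at h5 ⊢
  exact four_pow_add_pow_eq_zero hb0 hm hy h5

end Congruences

theorem lt_iff_lt_of_add_pow_eq_pow {k b c y z y' z' : ℕ} (hb : 1 < b) (hc : 1 < c)
    (h : k + b ^ y = c ^ z) (h' : k + b ^ y' = c ^ z') : y < y' ↔ z < z' := by
  rw [← Nat.pow_lt_pow_iff_right hb, ← Nat.pow_lt_pow_iff_right (n := z) hc, ← h, ← h',
    Nat.add_lt_add_iff_left]

theorem one_lt_and_one_lt_or_of_add_pow_eq_pow {k b c y z y' z' : ℕ} (hb : 1 < b) (hc : 1 < c)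
    (hy : 0 < y) (hz : 0 < z) (hy' : 0 < y') (hz' : 0 < z') (h : k + b ^ y = c ^ z)
    (h' : k + b ^ y' = c ^ z') (hne : (y, z) ≠ (y', z')) :
    (1 < y ∧ 1 < z) ∨ (1 < y' ∧ 1 < z') := by
  have hlt := lt_iff_lt_of_add_pow_eq_pow hb hc h h'
  have hgt := lt_iff_lt_of_add_pow_eq_pow hb hc h' h
  rw [Ne, Prod.mk.injEq] at hne
  omega

theorem one_lt_and_one_lt_of_four_add_pow_eq_pow {b c m n y z : ℕ} (hb : b.Prime)
    (hb8 : b % 8 = 5) (hb5 : ¬ 5 ∣ b) (hc5 : ¬ 5 ∣ c) (hn : n ≠ 0) (hy : Odd y)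
    (hz : Odd z) (h : 2 ^ (2 * m) + b ^ (2 * n) = c) (h' : 4 + b ^ y = c ^ z) : 1 < y ∧ 1 < z := by
  refine ⟨lt_of_le_of_ne' hy.pos ?_, lt_of_le_of_ne' hz.pos ?_⟩
  · rintro rfl
    have hc : c ≤ c ^ z := Nat.le_self_pow hz.pos.ne' c
    have hbn : 5 * b ≤ b ^ (2 * n) := by
      calc 5 * b ≤ b * b := Nat.mul_le_mul_right b (by omega)
        _ = b ^ 2 := (sq b).symm
        _ ≤ b ^ (2 * n) := Nat.pow_le_pow_right hb.pos (by omega)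
    rw [pow_one] at h'
    linarith [hb.two_le, Nat.zero_le (2 ^ (2 * m))]
  · rintro rfl
    rw [pow_one, ← h] at h'
    exact two_pow_add_pow_ne_four_add_pow hb hb8 hb5 (h ▸ hc5) hn hy h'.symm

/-- Section 5: if `(a,b,c)` is a non-exceptional triple of distinct primes with more
than one solution and `b ≡ 13 mod 24`, `c ≡ 17 mod 24`, then `4 + b^y₂ = c^z₂` for
some odd `y₂ > 1` and odd `z₂ > 1`. -/
theorem stmt_19 (a b c : ℕ) (ha : Nat.Prime a) (hb : Nat.Prime b) (hc : Nat.Prime c)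
    (hab : a < b) (hac : a ≠ c) (hbc : b ≠ c)
    (hexc : (a, b, c) ≠ (2, 3, 5) ∧ (a, b, c) ≠ (2, 3, 11) ∧ (a, b, c) ≠ (2, 5, 3) ∧
        (a, b, c) ≠ (2, 7, 3) ∧ (a, b, c) ≠ (3, 5, 2) ∧ (a, b, c) ≠ (3, 13, 2))
    (hmany : ∃ s t : ℕ × ℕ × ℕ, s ≠ t ∧
        (0 < s.1 ∧ 0 < s.2.1 ∧ 0 < s.2.2 ∧ a ^ s.1 + b ^ s.2.1 = c ^ s.2.2) ∧
        (0 < t.1 ∧ 0 < t.2.1 ∧ 0 < t.2.2 ∧ a ^ t.1 + b ^ t.2.1 = c ^ t.2.2))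
    (hb24 : b % 24 = 13) (hc24 : c % 24 = 17) :
    ∃ y₂ z₂ : ℕ, Odd y₂ ∧ Odd z₂ ∧ 1 < y₂ ∧ 1 < z₂ ∧ 4 + b ^ y₂ = c ^ z₂ := by
  have hb5 : ¬ 5 ∣ b := mt (Nat.prime_dvd_prime_iff_eq Nat.prime_five hb).1 (by omega)
  have hc5 : ¬ 5 ∣ c := mt (Nat.prime_dvd_prime_iff_eq Nat.prime_five hc).1 (by omega)
  have hbo : Odd b := Nat.odd_iff.2 (by omega)
  have hco : Odd c := Nat.odd_iff.2 (by omega)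
  obtain ⟨⟨x, y, z⟩, ⟨x', y', z'⟩, hne, ⟨hx, hy, hz, h⟩, hx', hy', hz', h'⟩ := hmany
  dsimp only at hx hy hz h hx' hy' hz' h'
  obtain rfl : a = 2 := ha.even_iff.1 (even_of_pow_add_pow_eq_pow hbo hco h)
  rcases two_pow_add_pow_eq_pow_cases hb24 hb5 hc24 hc5 hx.ne' h with
      ⟨rfl, hyo, hzo⟩ | ⟨m, n, rfl, rfl, rfl⟩ <;>
    rcases two_pow_add_pow_eq_pow_cases hb24 hb5 hc24 hc5 hx'.ne' h' with
      ⟨rfl, hyo', hzo'⟩ | ⟨m', n', rfl, rfl, rfl⟩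
  · have hyz : (y, z) ≠ (y', z') := by simpa using hne
    rcases one_lt_and_one_lt_or_of_add_pow_eq_pow hb.one_lt hc.one_lt hy hz hy' hz' h h' hyz with
      ⟨hy1, hz1⟩ | ⟨hy1, hz1⟩
    exacts [⟨y, z, hyo, hzo, hy1, hz1, h⟩, ⟨y', z', hyo', hzo', hy1, hz1, h'⟩]
  · obtain ⟨hy1, hz1⟩ := one_lt_and_one_lt_of_four_add_pow_eq_pow hb (by omega) hb5 hc5
      (by omega) hyo hzo (h'.trans (pow_one c)) h
    exact ⟨y, z, hyo, hzo, hy1, hz1, h⟩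
  · obtain ⟨hy1, hz1⟩ := one_lt_and_one_lt_of_four_add_pow_eq_pow hb (by omega) hb5 hc5
      (by omega) hyo' hzo' (h.trans (pow_one c)) h'
    exact ⟨y', z', hyo', hzo', hy1, hz1, h'⟩
  · obtain ⟨rfl, rfl⟩ := two_pow_add_pow_eq_prime_unique hc hbo hb.one_lt (by omega)
      (h.trans (pow_one c)) (h'.trans (pow_one c))
    exact absurd rfl hne
end
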